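/- Suppose the lattice operator H is stable and admits a lattice Green's function 𝒢. Let p ∈ ℕ₀, let α < −1 be a real number, let c > 0, and let u ∈ 𝓗¹ satisfy |H[u](ℓ)| ≤ c⟨ℓ⟩^{−d−p}(log⟨ℓ⟩)^α for all ℓ ∈ Λ, and 𝓘_i[u] = 0 for i = 0,…,p−1. Then for each j ∈ {1,2} there is a constant C such that |D^j u(ℓ)| ≤ C⟨ℓ⟩^{2−d−p−j} for all ℓ ∈ Λ (no logarithmic factor). For j ≥ 3 the same bound holds provided additionally |D^m H[u](ℓ)| ≤ c⟨ℓ⟩^{−d−p−m}(log⟨ℓ⟩)^α for all ℓ and m = 1,…,j−2. -/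

import Mathlib

noncomputable section

open scoped BigOperators
open MeasureTheory Filter Topology

namespace Defect

abbrev Vec (n : ℕ) : Type := Fin n → ℝ

/-- Euclidean norm of a vector in `ℝ^n`. -/
def enorm {n : ℕ} (v : Vec n) : ℝ := Real.sqrt (∑ i, (v i) ^ 2)

/-- `⟨x⟩ := |x| + 2`. -/
def ang {n : ℕ} (v : Vec n) : ℝ := enorm v + 2

def dotV {n : ℕ} (x y : Vec n) : ℝ := ∑ i, x i * y i

/-- Matrix-vector product for a plain `Fin N → Fin N → ℝ` matrix. -/
def mulV {N : ℕ} (M : Fin N → Fin N → ℝ) (v : Vec N) : Vec N := fun i => ∑ j, M i j * v j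

/-- Euclidean (Frobenius) norm of an `N × N` array. -/
def mnorm {N : ℕ} (M : Fin N → Fin N → ℝ) : ℝ := Real.sqrt (∑ i, ∑ j, (M i j) ^ 2)

/-- The lattice point `A z` for `z ∈ ℤ^d`. -/
def latticePt (d : ℕ) (A : Matrix (Fin d) (Fin d) ℝ) (z : Fin d → ℤ) : Vec d :=
  fun i => ∑ j, A i j * (z j : ℝ)

/-- The Bravais lattice `Λ = A ℤ^d`. -/
def Lattice (d : ℕ) (A : Matrix (Fin d) (Fin d) ℝ) : Set (Vec d) :=
  Set.range (latticePt d A)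

/-- First-order finite difference `D_ρ u (ℓ) = u(ℓ+ρ) - u(ℓ)`. -/
def D1 {d : ℕ} {M : Type} [AddCommGroup M] (ρ : Vec d) (u : Vec d → M) (ℓ : Vec d) : M :=
  u (ℓ + ρ) - u ℓ

/-- Iterated finite difference `D_{ρ₁} ⋯ D_{ρ_j} u (ℓ)` (closed form). -/
def Dmulti {d : ℕ} {M : Type} [AddCommGroup M] [Module ℝ M] {j : ℕ}
    (ρs : Fin j → Vec d) (u : Vec d → M) (ℓ : Vec d) : M :=
  ∑ S : Finset (Fin j), ((-1 : ℝ) ^ (j - S.card)) • u (ℓ + ∑ i ∈ S, ρs i)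

/-- `|Du(ℓ)|²`, the squared Euclidean norm of the stencil of first differences. -/
def Dnorm1Sq {d N : ℕ} (R : Finset (Vec d)) (u : Vec d → Vec N) (ℓ : Vec d) : ℝ :=
  ∑ ρ ∈ R, (enorm (D1 ρ u ℓ)) ^ 2

/-- `|D^j u(ℓ)|`, the Euclidean norm of the array `(D_{ρ⃗} u(ℓ))_{ρ⃗ ∈ R^j}`. -/
def DnormJ {d N : ℕ} (R : Finset (Vec d)) (j : ℕ) (u : Vec d → Vec N) (ℓ : Vec d) : ℝ :=
  Real.sqrt (∑ ρs : Fin j → {x // x ∈ R},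
    (enorm (Dmulti (fun i => (ρs i : Vec d)) u ℓ)) ^ 2)

/-- The linearized lattice operator
`H[u](ℓ) = ∑_{σ,ρ∈R} (C_{σρ} D_ρ u(ℓ-σ) - C_{σρ} D_ρ u(ℓ))`. -/
def Hop (d N : ℕ) (R : Finset (Vec d)) (C : Vec d → Vec d → Fin N → Fin N → ℝ)
    (u : Vec d → Vec N) (ℓ : Vec d) : Vec N :=
  ∑ σ ∈ R, ∑ ρ ∈ R, (mulV (C σ ρ) (D1 ρ u (ℓ - σ)) - mulV (C σ ρ) (D1 ρ u ℓ))

/-- `u ∈ 𝓗¹`. -/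
def InH1 {d N : ℕ} (A : Matrix (Fin d) (Fin d) ℝ) (R : Finset (Vec d))
    (u : Vec d → Vec N) : Prop :=
  Summable fun z : Fin d → ℤ => Dnorm1Sq R u (latticePt d A z)

/-- `u ∈ 𝓗ᶜ` : the stencil `Du` has bounded support on the lattice. -/
def InHc {d N : ℕ} (A : Matrix (Fin d) (Fin d) ℝ) (R : Finset (Vec d))
    (u : Vec d → Vec N) : Prop :=
  ∃ rad : ℝ, ∀ z : Fin d → ℤ, rad ≤ enorm (latticePt d A z) →
    ∀ ρ ∈ R, D1 ρ u (latticePt d A z) = 0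

/-- Stability of the lattice operator `H`. -/
def IsStable (d N : ℕ) (A : Matrix (Fin d) (Fin d) ℝ) (R : Finset (Vec d))
    (C : Vec d → Vec d → Fin N → Fin N → ℝ) : Prop :=
  ∃ c₀ : ℝ, 0 < c₀ ∧ ∀ u : Vec d → Vec N, InHc A R u →
    c₀ * (∑' z : Fin d → ℤ, Dnorm1Sq R u (latticePt d A z)) ≤
      ∑' z : Fin d → ℤ, ∑ σ ∈ R, ∑ ρ ∈ R,
        dotV (D1 σ u (latticePt d A z)) (mulV (C σ ρ) (D1 ρ u (latticePt d A z)))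

/-- `k`-th column of a matrix-valued function. -/
def col {d N : ℕ} (G : Vec d → Fin N → Fin N → ℝ) (k : Fin N) : Vec d → Vec N :=
  fun x i => G x i k

/-- `|D^j 𝒢(ℓ)|` for matrix-valued `𝒢`. -/
def DnormJmat {d N : ℕ} (R : Finset (Vec d)) (j : ℕ)
    (G : Vec d → Fin N → Fin N → ℝ) (ℓ : Vec d) : ℝ :=
  Real.sqrt (∑ k : Fin N, (DnormJ R j (col G k) ℓ) ^ 2)

/-- `𝒢` is a lattice Green's function for `H`. -/
def IsLatticeGreen (d N : ℕ) (A : Matrix (Fin d) (Fin d) ℝ) (R : Finset (Vec d))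
    (C : Vec d → Vec d → Fin N → Fin N → ℝ) (G : Vec d → Fin N → Fin N → ℝ) : Prop :=
  (∀ (k : Fin N) (z : Fin d → ℤ),
      Hop d N R C (col G k) (latticePt d A z) =
        if latticePt d A z = 0 then Pi.single k 1 else 0) ∧
  (∀ j : ℕ, 1 ≤ j → ∃ cj : ℝ, ∀ z : Fin d → ℤ,
      DnormJmat R j G (latticePt d A z) ≤
        cj * ang (latticePt d A z) ^ ((2 : ℝ) - d - j))

/-- A symmetric array `b ∈ (ℝ^{Fin d})^{⊙ i}`. -/
def SymArr {d i : ℕ} (b : (Fin i → Fin d) → ℝ) : Prop :=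
  ∀ (π : Equiv.Perm (Fin i)) (σv : Fin i → Fin d), b (σv ∘ π) = b σv

/-- `b : D_𝒮^i f`, a multipole term built from the basis `s`. -/
def multipole (d N : ℕ) (s : Fin d → Vec d) (i : ℕ) (b : (Fin i → Fin d) → ℝ)
    (f : Vec d → Vec N) : Vec d → Vec N :=
  fun ℓ => ∑ σv : Fin i → Fin d, b σv • Dmulti (fun m => s (σv m)) f ℓ

/-- Iterated partial derivative `∂_{j₁} ⋯ ∂_{j_i} f (x)`. -/
def pderivMulti {d : ℕ} (i : ℕ) (js : Fin i → Fin d) (f : Vec d → ℝ) (x : Vec d) : ℝ :=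
  iteratedFDeriv ℝ i f x (fun m => Pi.single (js m) (1 : ℝ))

/-- `a : ∇^i f (x)` for a tensor `a ∈ (ℝ^d)^{⊗ i}`. -/
def aContract {d : ℕ} (i : ℕ) (a : (Fin i → Fin d) → ℝ) (f : Vec d → ℝ) (x : Vec d) : ℝ :=
  ∑ js : Fin i → Fin d, a js * pderivMulti i js f x

/-- Elementary tensor `σ⃗^⊗` as an array. -/
def tensorPow {d k : ℕ} (σs : Fin k → Vec d) : (Fin k → Fin d) → ℝ :=
  fun js => ∏ m, σs m (js m)

/-- Symmetric tensor product `σ⃗^⊙`. -/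
def symTensor {d k : ℕ} (σs : Fin k → Vec d) : (Fin k → Fin d) → ℝ :=
  fun js => ((k.factorial : ℝ))⁻¹ * ∑ π : Equiv.Perm (Fin k), tensorPow (σs ∘ π) js

/-- A symmetric tensor (array invariant under index permutations). -/
def SymTensor {d k : ℕ} (T : (Fin k → Fin d) → ℝ) : Prop :=
  ∀ (π : Equiv.Perm (Fin k)) (js : Fin k → Fin d), T (js ∘ π) = T js

/-- `∂V/∂g_ρ (gs)` as a vector in `ℝ^N`. -/
def gradV {d N : ℕ} (R : Finset (Vec d)) (V : ({x // x ∈ R} → Vec N) → ℝ)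
    (ρ : {x // x ∈ R}) (gs : {x // x ∈ R} → Vec N) : Vec N :=
  fun i => fderiv ℝ V gs (Pi.single ρ (Pi.single i 1))

/-- The finite-difference stencil `Du(ℓ) = (D_ρ u(ℓ))_{ρ ∈ R}`. -/
def Dstencil {d N : ℕ} (R : Finset (Vec d)) (u : Vec d → Vec N) (ℓ : Vec d) :
    {x // x ∈ R} → Vec N :=
  fun ρ => D1 (ρ : Vec d) u ℓ

/-- `C_{σρ} = ∂²V/∂g_σ ∂g_ρ (0)`. -/
def CofV {d N : ℕ} (R : Finset (Vec d)) (V : ({x // x ∈ R} → Vec N) → ℝ)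
    (σ ρ : Vec d) (i j : Fin N) : ℝ :=
  if hσ : σ ∈ R then
    if hρ : ρ ∈ R then
      iteratedFDeriv ℝ 2 V 0
        ![Pi.single ⟨σ, hσ⟩ (Pi.single i 1), Pi.single ⟨ρ, hρ⟩ (Pi.single j 1)]
    else 0
  else 0

/-- Summand of the first variation `δE(u)[v]` at a site. -/
def deltaEsite {d N : ℕ} (R : Finset (Vec d)) (V : ({x // x ∈ R} → Vec N) → ℝ)
    (u v : Vec d → Vec N) (ℓ : Vec d) : ℝ :=
  ∑ ρ ∈ R.attach, dotV (gradV R V ρ (Dstencil R u ℓ)) (D1 (ρ : Vec d) v ℓ)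

/-- The pointwise atomistic force `δE(u)(ℓ)`. -/
def deltaEpt {d N : ℕ} (R : Finset (Vec d)) (V : ({x // x ∈ R} → Vec N) → ℝ)
    (u : Vec d → Vec N) (ℓ : Vec d) : Vec N :=
  ∑ ρ ∈ R.attach,
    (gradV R V ρ (Dstencil R u (ℓ - (ρ : Vec d))) - gradV R V ρ (Dstencil R u ℓ))

/-- Point symmetry of the site potential. -/
def PointSym {d N : ℕ} (R : Finset (Vec d)) (hRsym : ∀ ρ ∈ R, -ρ ∈ R)
    (V : ({x // x ∈ R} → Vec N) → ℝ) : Prop :=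
  ∀ gs : {x // x ∈ R} → Vec N,
    V (fun ρ => -(gs ⟨-(ρ : Vec d), hRsym _ ρ.2⟩)) = V gs

/-- The Cauchy–Born elasticity tensor `ℂ_{iajb}`. -/
def CB {d N : ℕ} (A : Matrix (Fin d) (Fin d) ℝ) (R : Finset (Vec d))
    (C : Vec d → Vec d → Fin N → Fin N → ℝ)
    (i : Fin N) (a : Fin d) (j : Fin N) (b : Fin d) : ℝ :=
  (|A.det|)⁻¹ * ∑ ρ ∈ R, ∑ σ ∈ R, C ρ σ i j * ρ a * σ b



/-- first difference on `ℤ^d` -/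
def dl {d : ℕ} (r : Fin d → ℤ) (h : (Fin d → ℤ) → ℝ) : (Fin d → ℤ) → ℝ :=
  fun z => h (z + r) - h z

instance dl_lc {d : ℕ} : LeftCommutative (dl (d := d)) :=
  ⟨fun r s h => by
    funext z
    simp only [dl]
    rw [show z + r + s = z + s + r by abel]
    ring⟩

/-- iterated difference over a multiset of directions -/
def dm {d : ℕ} (s : Multiset (Fin d → ℤ)) (h : (Fin d → ℤ) → ℝ) : (Fin d → ℤ) → ℝ :=
  s.foldr dl h

lemma dm_zero {d : ℕ} (h : (Fin d → ℤ) → ℝ) : dm 0 h = h := by simp [dm]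

lemma dm_cons {d : ℕ} (r : Fin d → ℤ) (s : Multiset (Fin d → ℤ)) (h : (Fin d → ℤ) → ℝ) :
    dm (r ::ₘ s) h = dl r (dm s h) := by simp [dm]

lemma dm_dl {d : ℕ} (r : Fin d → ℤ) (s : Multiset (Fin d → ℤ)) (h : (Fin d → ℤ) → ℝ) :
    dm s (dl r h) = dl r (dm s h) := by
  induction s using Multiset.induction_on with
  | empty => simp [dm_zero]
  | cons a s ih => rw [dm_cons, dm_cons, ih, dl_lc.left_comm]

lemma dm_cons' {d : ℕ} (r : Fin d → ℤ) (s : Multiset (Fin d → ℤ)) (h : (Fin d → ℤ) → ℝ) :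
    dm (r ::ₘ s) h = dm s (dl r h) := by rw [dm_cons, dm_dl]

lemma dm_add {d : ℕ} (s t : Multiset (Fin d → ℤ)) (h : (Fin d → ℤ) → ℝ) :
    dm (s + t) h = dm s (dm t h) := by
  induction s using Multiset.induction_on with
  | empty => simp [dm_zero]
  | cons a s ih => rw [Multiset.cons_add, dm_cons, dm_cons, ih]

lemma dm_reflect {d : ℕ} (s : Multiset (Fin d → ℤ)) (g : (Fin d → ℤ) → ℝ)
    (l m : Fin d → ℤ) :
    dm s (fun m => g (l - m)) m = dm (s.map (fun r => -r)) g (l - m) := by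
  induction s using Multiset.induction_on generalizing m with
  | empty => simp [dm_zero]
  | cons a s ih =>
    rw [Multiset.map_cons, dm_cons, dm_cons]
    simp only [dl]
    rw [ih, ih, show l - (m + a) = l - m + -a by abel]

/-- `ℓ¹` norm. -/
def nrm {d : ℕ} (z : Fin d → ℤ) : ℕ := ∑ i, (z i).natAbs

/-- weight -/
def wt {d : ℕ} (z : Fin d → ℤ) : ℝ := (nrm z : ℝ) + 2

lemma nrm_add {d : ℕ} (x y : Fin d → ℤ) : nrm (x + y) ≤ nrm x + nrm y := by
  unfold nrm
  rw [← Finset.sum_add_distrib]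
  exact Finset.sum_le_sum fun i _ => Int.natAbs_add_le _ _

lemma nrm_neg {d : ℕ} (x : Fin d → ℤ) : nrm (-x) = nrm x := by
  simp [nrm]

lemma nrm_zero {d : ℕ} : nrm (0 : Fin d → ℤ) = 0 := by simp [nrm]

lemma nrm_eq_zero {d : ℕ} {x : Fin d → ℤ} (h : nrm x = 0) : x = 0 := by
  funext i
  have := (Finset.sum_eq_zero_iff.mp h) i (Finset.mem_univ _)
  simpa using this

lemma natAbs_le_nrm {d : ℕ} (x : Fin d → ℤ) (i : Fin d) : (x i).natAbs ≤ nrm x :=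
  Finset.single_le_sum (f := fun i => (x i).natAbs) (fun _ _ => Nat.zero_le _) (Finset.mem_univ i)

lemma abs_le_nrm {d : ℕ} (x : Fin d → ℤ) (i : Fin d) : |(x i : ℝ)| ≤ nrm x := by
  have := natAbs_le_nrm x i
  have h2 : ((x i).natAbs : ℝ) ≤ nrm x := by exact_mod_cast this
  rwa [Nat.cast_natAbs, Int.cast_abs] at h2

lemma two_le_wt {d : ℕ} (x : Fin d → ℤ) : 2 ≤ wt x := by
  unfold wt; linarith [(Nat.cast_nonneg (nrm x) : (0:ℝ) ≤ _)]

lemma wt_pos {d : ℕ} (x : Fin d → ℤ) : 0 < wt x := by linarith [two_le_wt x]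

lemma wt_neg {d : ℕ} (x : Fin d → ℤ) : wt (-x) = wt x := by simp [wt, nrm_neg]

lemma wt_add_le {d : ℕ} (x y : Fin d → ℤ) : wt (x + y) ≤ (1 + nrm y) * wt x := by
  have h : (nrm (x + y) : ℝ) ≤ nrm x + nrm y := by exact_mod_cast nrm_add x y
  have h1 : (0:ℝ) ≤ nrm x := Nat.cast_nonneg _
  have h2 : (0:ℝ) ≤ nrm y := Nat.cast_nonneg _
  unfold wt
  nlinarith [mul_nonneg h1 h2]

lemma wt_le_add {d : ℕ} (x y : Fin d → ℤ) : wt x ≤ (1 + nrm y) * wt (x + y) := by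
  have := wt_add_le (x + y) (-y)
  rwa [nrm_neg, add_neg_cancel_right] at this

lemma log_wt_pos {d : ℕ} (x : Fin d → ℤ) : 0 < Real.log (wt x) :=
  Real.log_pos (by linarith [two_le_wt x])

/-- Weights for which translation costs a constant. -/
def Slow {d : ℕ} (B : (Fin d → ℤ) → ℝ) : Prop :=
  (∀ z, 0 ≤ B z) ∧ ∀ r, ∃ C, 0 ≤ C ∧ ∀ z, B (z + r) ≤ C * B z

lemma slow_pow {d : ℕ} (n : ℕ) : Slow (fun z : Fin d → ℤ => 1 / wt z ^ n) := by
  refine ⟨fun z => by have := wt_pos z; positivity, fun r => ⟨(1 + nrm r) ^ n, by positivity, fun z => ?_⟩⟩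
  have h1 := wt_pos z
  have h2 := wt_pos (z + r)
  rw [mul_one_div, div_le_div_iff₀ (by positivity) (by positivity), one_mul, ← mul_pow]
  exact pow_le_pow_left₀ h1.le (wt_le_add z r) n

lemma log_slow {d : ℕ} (r : Fin d → ℤ) : ∃ C, 0 ≤ C ∧ ∀ z, Real.log (wt z) ≤ C * Real.log (wt (z + r)) := by
  have hl2 : 0 < Real.log 2 := Real.log_pos (by norm_num)
  have h0 : (0:ℝ) ≤ nrm r := Nat.cast_nonneg _
  have h3 : 0 ≤ Real.log (1 + nrm r) := Real.log_nonneg (by linarith)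
  refine ⟨Real.log (1 + nrm r) / Real.log 2 + 1, by positivity, fun z => ?_⟩
  have h1 := wt_pos z
  have h2 := wt_pos (z + r)
  calc Real.log (wt z) ≤ Real.log ((1 + nrm r) * wt (z + r)) := Real.log_le_log h1 (wt_le_add z r)
    _ = Real.log (1 + nrm r) + Real.log (wt (z + r)) := Real.log_mul (by positivity) h2.ne'
    _ ≤ _ := by
      have : Real.log 2 ≤ Real.log (wt (z+r)) := Real.log_le_log (by norm_num) (two_le_wt _)
      have h4 : Real.log (1 + nrm r) ≤ Real.log (1 + nrm r) / Real.log 2 * Real.log (wt (z+r)) := by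
        rw [div_mul_eq_mul_div, le_div_iff₀ hl2]
        exact mul_le_mul_of_nonneg_left this h3
      linarith

lemma slow_pow_log {d : ℕ} (n : ℕ) :
    Slow (fun z : Fin d → ℤ => 1 / (wt z ^ n * Real.log (wt z))) := by
  refine ⟨fun z => by have := wt_pos z; have := log_wt_pos z; positivity, fun r => ?_⟩
  obtain ⟨C, hC, h⟩ := log_slow r
  refine ⟨(1 + nrm r) ^ n * C, by positivity, fun z => ?_⟩
  have h1 := wt_pos z
  have h2 := wt_pos (z + r)
  have h3 := log_wt_pos z
  have h4 := log_wt_pos (z + r)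
  rw [mul_one_div, div_le_div_iff₀ (by positivity) (by positivity), one_mul]
  calc _ ≤ ((1 + nrm r) * wt (z + r)) ^ n * (C * Real.log (wt (z + r))) := by
        gcongr
        · exact wt_le_add z r
        · exact h z
    _ = _ := by rw [mul_pow]; ring

/-- extension of bounds from generators to all directions -/
lemma ext_dirs {d : ℕ} (Rz : Set (Fin d → ℤ)) (hR : AddSubgroup.closure Rz = ⊤)
    (B : (Fin d → ℤ) → ℝ) (hB : Slow B) (n : ℕ) : ∀ (h : (Fin d → ℤ) → ℝ),
    (∀ s : Multiset (Fin d → ℤ), Multiset.card s = n → (∀ r ∈ s, r ∈ Rz) →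
      ∃ C, ∀ z, |dm s h z| ≤ C * B z) →
    ∀ s : Multiset (Fin d → ℤ), Multiset.card s = n → ∃ C, ∀ z, |dm s h z| ≤ C * B z := by
  induction n with
  | zero =>
    intro h hh s hs
    rw [Multiset.card_eq_zero] at hs
    subst hs
    exact hh 0 rfl (by simp)
  | succ n ih =>
    intro h hh s hs
    obtain ⟨r, hr0⟩ := Multiset.card_pos_iff_exists_mem.mp (by omega : 0 < Multiset.card s)
    obtain ⟨s, rfl⟩ := Multiset.exists_cons_of_mem hr0
    clear hr0
    rw [Multiset.card_cons] at hs
    have hs' : Multiset.card s = n := by omega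
    have key : ∀ ρ ∈ Rz, ∃ C, ∀ z, |dl ρ (dm s h) z| ≤ C * B z := by
      intro ρ hρ
      obtain ⟨C, hC⟩ := ih (dl ρ h) (fun t ht htR => by
        rw [← dm_cons']
        exact hh (ρ ::ₘ t) (by simp [ht]) (by
          intro r hr
          rcases Multiset.mem_cons.mp hr with rfl | hr
          · exact hρ
          · exact htR r hr)) s hs'
      exact ⟨C, by simpa [dm_dl] using hC⟩
    rw [dm_cons]
    generalize dm s h = k at key ⊢
    have hr : r ∈ AddSubgroup.closure Rz := by rw [hR]; trivial
    induction hr using AddSubgroup.closure_induction with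
    | mem x hx => exact key x hx
    | zero => exact ⟨0, fun z => by simp [dl]⟩
    | add x y _ _ hx hy =>
      obtain ⟨C1, h1⟩ := hx
      obtain ⟨C2, h2⟩ := hy
      obtain ⟨C3, h30, h3⟩ := hB.2 y
      refine ⟨|C1| * C3 + C2, fun z => ?_⟩
      have e : dl (x + y) k z = dl x k (z + y) + dl y k z := by
        simp only [dl]; rw [show z + (x + y) = z + y + x by abel]; ring
      rw [e]
      calc _ ≤ |dl x k (z + y)| + |dl y k z| := abs_add_le _ _
        _ ≤ |C1| * (C3 * B z) + C2 * B z := by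
          refine add_le_add ((h1 _).trans ?_) (h2 z)
          calc C1 * B (z + y) ≤ |C1| * B (z + y) := by
                gcongr
                · exact hB.1 _
                · exact le_abs_self _
            _ ≤ _ := by gcongr; exact h3 z
        _ = _ := by ring
    | neg x _ hx =>
      obtain ⟨C1, h1⟩ := hx
      obtain ⟨C3, h30, h3⟩ := hB.2 (-x)
      refine ⟨|C1| * C3, fun z => ?_⟩
      have e : dl (-x) k z = - dl x k (z + -x) := by
        simp only [dl]; rw [show z + -x + x = z by abel]; ring
      rw [e, abs_neg]
      calc _ ≤ C1 * B (z + -x) := h1 _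
        _ ≤ |C1| * B (z + -x) := by
                gcongr
                · exact hB.1 _
                · exact le_abs_self _
        _ ≤ |C1| * (C3 * B z) := by gcongr; exact h3 z
        _ = _ := by ring

/-! ### Counting -/

/-- dyadic level -/
def lev {d : ℕ} (z : Fin d → ℤ) : ℕ := Nat.log 2 (nrm z + 2)

lemma lev_le {d : ℕ} (z : Fin d → ℤ) : (2:ℝ) ^ lev z ≤ wt z := by
  have : 2 ^ lev z ≤ nrm z + 2 := Nat.pow_log_le_self 2 (by omega)
  unfold wt
  exact_mod_cast this

lemma lt_lev {d : ℕ} (z : Fin d → ℤ) : wt z < (2:ℝ) ^ (lev z + 1) := by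
  have : nrm z + 2 < 2 ^ (lev z + 1) := Nat.lt_pow_succ_log_self (by norm_num) _
  unfold wt
  exact_mod_cast this

lemma one_le_lev {d : ℕ} (z : Fin d → ℤ) : 1 ≤ lev z :=
  Nat.log_pos (by norm_num) (by omega)

lemma finite_nrm_le {d : ℕ} (n : ℕ) : {z : Fin d → ℤ | nrm z ≤ n}.Finite := by
  refine ((Fintype.piFinset (fun _ : Fin d => Finset.Icc (-(n:ℤ)) n)).finite_toSet).subset ?_
  intro z hz
  simp only [Finset.mem_coe, Fintype.mem_piFinset, Finset.mem_Icc]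
  intro i
  have := natAbs_le_nrm z i
  have h2 : nrm z ≤ n := hz
  omega

lemma card_le_of_lev {d : ℕ} (s : Finset (Fin d → ℤ)) (n : ℕ) (hs : ∀ z ∈ s, nrm z ≤ n) :
    s.card ≤ (2 * n + 1) ^ d := by
  have : s ⊆ Fintype.piFinset (fun _ : Fin d => Finset.Icc (-(n:ℤ)) n) := by
    intro z hz
    simp only [Fintype.mem_piFinset, Finset.mem_Icc]
    intro i
    have := natAbs_le_nrm z i
    have h2 : nrm z ≤ n := hs z hz
    omega
  refine (Finset.card_le_card this).trans ?_
  rw [Fintype.card_piFinset]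
  simp only [Int.card_Icc, Finset.prod_const, Finset.card_univ, Fintype.card_fin]
  apply le_of_eq
  congr 1
  omega

lemma dyadic_sum {d : ℕ} (s : Finset (Fin d → ℤ)) (F : (Fin d → ℤ) → ℝ) (a : ℕ → ℝ)
    (ha : ∀ k, 0 ≤ a k) (hF : ∀ z, F z ≤ a (lev z) / (2:ℝ) ^ (lev z * d)) :
    ∑ z ∈ s, F z ≤ 5 ^ d * ∑ k ∈ s.image lev, a k := by
  classical
  rw [← Finset.sum_fiberwise_of_maps_to (t := s.image lev) (g := lev)
    (fun x hx => Finset.mem_image_of_mem _ hx), Finset.mul_sum]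
  refine Finset.sum_le_sum fun k _ => ?_
  have hc : (s.filter (fun z => lev z = k)).card ≤ (5 * 2 ^ k) ^ d := by
    refine (card_le_of_lev _ (2 * 2 ^ k) ?_).trans ?_
    · intro z hz
      have h1 := (Finset.mem_filter.mp hz).2
      have : nrm z + 2 < 2 ^ (lev z + 1) := Nat.lt_pow_succ_log_self (by norm_num) _
      rw [h1, pow_succ] at this
      omega
    · refine Nat.pow_le_pow_left ?_ d
      have : 1 ≤ 2 ^ k := Nat.one_le_two_pow
      omega
  calc ∑ z ∈ s.filter (fun z => lev z = k), F z
      ≤ ∑ z ∈ s.filter (fun z => lev z = k), a k / (2:ℝ) ^ (k * d) := by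
        refine Finset.sum_le_sum fun z hz => ?_
        have h1 := (Finset.mem_filter.mp hz).2
        rw [← h1]; exact hF z
    _ = (s.filter (fun z => lev z = k)).card * (a k / (2:ℝ) ^ (k * d)) := by
        rw [Finset.sum_const, nsmul_eq_mul]
    _ ≤ ((5 * 2 ^ k) ^ d : ℝ) * (a k / (2:ℝ) ^ (k * d)) := by
        gcongr
        · have := ha k; positivity
        · exact_mod_cast hc
    _ = 5 ^ d * a k := by
        rw [mul_pow, ← pow_mul]
        field_simp

lemma lev_lt_of_wt {d : ℕ} {z : Fin d → ℤ} {X : ℝ} (_hX : 2 ≤ X) (h : wt z ≤ X) :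
    lev z < Nat.log 2 ⌊X⌋₊ + 1 := by
  unfold lev
  refine Nat.lt_succ_of_le (Nat.log_mono_right ?_)
  refine Nat.le_floor ?_
  unfold wt at h
  exact_mod_cast h

lemma pow_log_floor {X : ℝ} (hX : 2 ≤ X) : (2:ℝ) ^ Nat.log 2 ⌊X⌋₊ ≤ X := by
  have h0 : ⌊X⌋₊ ≠ 0 := by
    have : 1 ≤ ⌊X⌋₊ := Nat.le_floor (by norm_num; linarith)
    omega
  have h1 : 2 ^ Nat.log 2 ⌊X⌋₊ ≤ ⌊X⌋₊ := Nat.pow_log_le_self 2 h0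
  have h2 : (2:ℝ) ^ Nat.log 2 ⌊X⌋₊ ≤ ⌊X⌋₊ := by exact_mod_cast h1
  exact h2.trans (Nat.floor_le (by linarith))

/-- `∑_{w ≤ X} w^{1-d} ≲ X` -/
lemma sum_S1 {d : ℕ} (hd : 1 ≤ d) (s : Finset (Fin d → ℤ)) (X : ℝ) (hX : 2 ≤ X)
    (hs : ∀ z ∈ s, wt z ≤ X) : ∑ z ∈ s, 1 / wt z ^ (d - 1) ≤ (4 * 5 ^ d) * X := by
  have h := dyadic_sum s (fun z => 1 / wt z ^ (d - 1)) (fun k => 2 ^ (k + 1)) (fun k => by positivity)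
    (fun z => by
      have h1 := lev_le z
      have h2 := (lt_lev z).le
      have h3 := wt_pos z
      rw [div_le_div_iff₀ (by positivity) (by positivity), one_mul, pow_mul]
      calc ((2:ℝ) ^ lev z) ^ d ≤ wt z ^ d := by gcongr
        _ = wt z * wt z ^ (d - 1) := by rw [← pow_succ']; congr 1; omega
        _ ≤ _ := by gcongr)
  refine h.trans ?_
  have h2 : ∑ k ∈ s.image lev, (2:ℝ) ^ (k + 1) ≤ ∑ k ∈ Finset.range (Nat.log 2 ⌊X⌋₊ + 1), (2:ℝ) ^ (k + 1) := by
    refine Finset.sum_le_sum_of_subset_of_nonneg ?_ (fun _ _ _ => by positivity)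
    intro k hk
    obtain ⟨z, hz, rfl⟩ := Finset.mem_image.mp hk
    exact Finset.mem_range.mpr (lev_lt_of_wt hX (hs z hz))
  have h3 : ∑ k ∈ Finset.range (Nat.log 2 ⌊X⌋₊ + 1), (2:ℝ) ^ (k + 1) ≤ 4 * X := by
    simp_rw [pow_succ]
    rw [← Finset.sum_mul, geom_sum_eq (by norm_num)]
    have := pow_log_floor hX
    rw [pow_succ]
    linarith
  calc (5:ℝ) ^ d * ∑ k ∈ s.image lev, (2:ℝ) ^ (k + 1) ≤ 5 ^ d * (4 * X) := by gcongr; exact h2.trans h3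
    _ = _ := by ring

/-- `∑_{w ≤ X} w^{-d} ≲ log X` -/
lemma sum_S0 {d : ℕ} (s : Finset (Fin d → ℤ)) (X : ℝ) (hX : 2 ≤ X)
    (hs : ∀ z ∈ s, wt z ≤ X) : ∑ z ∈ s, 1 / wt z ^ d ≤ (2 * 5 ^ d / Real.log 2) * Real.log X := by
  have hl2 : 0 < Real.log 2 := Real.log_pos (by norm_num)
  have h := dyadic_sum s (fun z => 1 / wt z ^ d) (fun k => 1) (fun k => by positivity)
    (fun z => by
      have h1 := lev_le z
      have h3 := wt_pos z
      rw [div_le_div_iff₀ (by positivity) (by positivity), one_mul, one_mul, pow_mul]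
      gcongr)
  refine h.trans ?_
  have h2 : ∑ k ∈ s.image lev, (1:ℝ) ≤ ∑ k ∈ Finset.range (Nat.log 2 ⌊X⌋₊ + 1), (1:ℝ) := by
    refine Finset.sum_le_sum_of_subset_of_nonneg ?_ (fun _ _ _ => by positivity)
    intro k hk
    obtain ⟨z, hz, rfl⟩ := Finset.mem_image.mp hk
    exact Finset.mem_range.mpr (lev_lt_of_wt hX (hs z hz))
  have h3 : ∑ k ∈ Finset.range (Nat.log 2 ⌊X⌋₊ + 1), (1:ℝ) ≤ 2 * Real.log X / Real.log 2 := by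
    simp only [Finset.sum_const, Finset.card_range, nsmul_eq_mul, mul_one]
    rw [le_div_iff₀ hl2]
    have h4 := Real.log_le_log (by positivity) (pow_log_floor hX)
    rw [Real.log_pow] at h4
    have h5 := Real.log_le_log (by norm_num) hX
    push_cast
    linarith
  calc (5:ℝ) ^ d * ∑ k ∈ s.image lev, (1:ℝ) ≤ 5 ^ d * (2 * Real.log X / Real.log 2) := by gcongr; exact h2.trans h3
    _ = _ := by ring

lemma card_wt {d : ℕ} (s : Finset (Fin d → ℤ)) (X : ℝ) (hX : 1 ≤ X)
    (hs : ∀ z ∈ s, wt z ≤ X) : (s.card : ℝ) ≤ (3 * X) ^ d := by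
  have := card_le_of_lev s ⌊X⌋₊ (fun z hz => Nat.le_floor (by
    have := hs z hz; unfold wt at this; linarith))
  have h2 : (s.card : ℝ) ≤ (2 * ⌊X⌋₊ + 1) ^ d := by exact_mod_cast this
  refine h2.trans ?_
  have := Nat.floor_le (by linarith : 0 ≤ X)
  gcongr
  linarith

lemma summable_log {d : ℕ} (α : ℝ) (hα : α < -1) :
    Summable (fun z : Fin d → ℤ => 1 / wt z ^ d * Real.log (wt z) ^ α) := by
  have hl2 : 0 < Real.log 2 := Real.log_pos (by norm_num)
  have hs : Summable (fun k : ℕ => (Real.log 2) ^ α * (k:ℝ) ^ α) :=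
    (Real.summable_nat_rpow.mpr hα).mul_left _
  refine summable_of_sum_le (c := 5 ^ d * ∑' k : ℕ, (Real.log 2) ^ α * (k:ℝ) ^ α) (fun z => ?_) (fun s => ?_)
  · have := wt_pos z
    have := log_wt_pos z
    positivity
  · refine (dyadic_sum s _ (fun k => (Real.log 2) ^ α * (k:ℝ) ^ α) (fun k => by positivity) (fun z => ?_)).trans ?_
    · have h1 := lev_le z
      have h3 := wt_pos z
      have h4 : (0:ℝ) < lev z := by exact_mod_cast one_le_lev z
      have h5 : 1 / wt z ^ d ≤ 1 / (2:ℝ) ^ (lev z * d) := by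
        rw [pow_mul]
        gcongr
      rw [mul_comm, div_eq_mul_one_div (Real.log 2 ^ α * _)]
      refine mul_le_mul ?_ h5 (by positivity) (by positivity)
      rw [← Real.mul_rpow hl2.le h4.le]
      refine Real.rpow_le_rpow_of_nonpos (by positivity) ?_ (by linarith)
      rw [mul_comm, ← Real.log_pow]
      exact Real.log_le_log (by positivity) h1
    · gcongr
      exact hs.sum_le_tsum _ (fun k _ => by positivity)



/-- binomial polynomial `t ↦ t(t-1)⋯(t-b+1)/b!` -/
def chs : ℕ → ℝ → ℝ
  | 0, _ => 1
  | (b + 1), t => chs b t * (t - b) / (b + 1)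

lemma chs_pascal (b : ℕ) (t : ℝ) : chs (b + 1) (t + 1) = chs (b + 1) t + chs b t := by
  induction b with
  | zero => simp [chs]
  | succ b ih =>
    rw [chs, ih]
    have e : chs (b + 1 + 1) t = chs (b + 1) t * (t - (b + 1)) / (b + 1 + 1) := by
      rw [chs]; push_cast; ring
    rw [e]
    have e2 : chs (b + 1) t = chs b t * (t - b) / (b + 1) := by rw [chs]
    have h1 : (b : ℝ) + 1 ≠ 0 := by positivity
    have h2 : (b : ℝ) + 1 + 1 ≠ 0 := by positivity
    have e3 : chs b t * (t - b) = chs (b + 1) t * (b + 1) := by rw [e2]; field_simp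
    push_cast
    field_simp
    linear_combination e3

lemma chs_zero_right (b : ℕ) : chs (b + 1) 0 = 0 := by
  induction b with
  | zero => simp [chs]
  | succ b ih => rw [chs, ih]; simp

lemma chs_bound (b : ℕ) (t : ℝ) : |chs b t| ≤ (1 + |t|) ^ b := by
  induction b with
  | zero => simp [chs]
  | succ b ih =>
    rw [chs, abs_div, abs_mul, pow_succ, mul_div_assoc]
    have h1 : (0:ℝ) < b + 1 := by positivity
    gcongr
    rw [abs_of_pos h1, div_le_iff₀ h1]
    have h2 : |t - b| ≤ |t| + b := by
      refine (abs_sub _ _).trans ?_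
      rw [abs_of_nonneg (Nat.cast_nonneg b : (0:ℝ) ≤ b)]
    have h3 : (0:ℝ) ≤ b := Nat.cast_nonneg b
    nlinarith [abs_nonneg t, mul_nonneg (abs_nonneg t) h3]

/-- unit vector -/
def ev {d : ℕ} (i : Fin d) : Fin d → ℤ := Pi.single i 1

/-- multiset of directions of a multi-index -/
def mst {d : ℕ} (β : Fin d → ℕ) : Multiset (Fin d → ℤ) := ∑ i, β i • {ev i}

lemma mst_card {d : ℕ} (β : Fin d → ℕ) : Multiset.card (mst β) = ∑ i, β i := by
  simp [mst]

lemma mst_add {d : ℕ} (β : Fin d → ℕ) (i : Fin d) :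
    mst (β + Pi.single i 1) = ev i ::ₘ mst β := by
  unfold mst
  simp only [Pi.add_apply, add_smul, Finset.sum_add_distrib]
  rw [Finset.sum_eq_single (f := fun x => (Pi.single i 1 : Fin d → ℕ) x • ({ev x} : Multiset (Fin d → ℤ))) i]
  · simp [add_comm]
  · intro b _ hb; simp [Pi.single_eq_of_ne hb]
  · simp

lemma mst_zero {d : ℕ} : mst (0 : Fin d → ℕ) = 0 := by simp [mst]

/-- multi-indices of order `< p` -/
def mix (d p : ℕ) : Finset (Fin d → ℕ) :=
  (Fintype.piFinset (fun _ : Fin d => Finset.range p)).filter (fun β => ∑ i, β i < p)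

lemma mem_mix {d p : ℕ} (β : Fin d → ℕ) : β ∈ mix d p ↔ ∑ i, β i < p := by
  unfold mix
  simp only [Finset.mem_filter, Fintype.mem_piFinset, Finset.mem_range, and_iff_right_iff_imp]
  intro h i
  exact lt_of_le_of_lt (Finset.single_le_sum (f := β) (fun _ _ => Nat.zero_le _) (Finset.mem_univ i)) h

/-- product of binomials -/
def chp {d : ℕ} (β : Fin d → ℕ) (z : Fin d → ℤ) : ℝ := ∏ i, chs (β i) (z i : ℝ)

lemma chp_diff {d : ℕ} (β : Fin d → ℕ) (z : Fin d → ℤ) (i : Fin d) :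
    chp (β + Pi.single i 1) (z + ev i) - chp (β + Pi.single i 1) z = chp β z := by
  unfold chp
  rw [← Finset.mul_prod_erase _ _ (Finset.mem_univ i), ← Finset.mul_prod_erase _ _ (Finset.mem_univ i),
    ← Finset.mul_prod_erase _ _ (Finset.mem_univ i)]
  have h1 : ∏ j ∈ Finset.univ.erase i, chs ((β + Pi.single i 1 : Fin d → ℕ) j) (((z + ev i) j : ℤ) : ℝ) =
      ∏ j ∈ Finset.univ.erase i, chs (β j) ((z j : ℤ) : ℝ) := by
    refine Finset.prod_congr rfl fun j hj => ?_
    have := Finset.ne_of_mem_erase hj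
    simp [ev, Pi.single_eq_of_ne this]
  have h2 : ∏ j ∈ Finset.univ.erase i, chs ((β + Pi.single i 1 : Fin d → ℕ) j) ((z j : ℤ) : ℝ) =
      ∏ j ∈ Finset.univ.erase i, chs (β j) ((z j : ℤ) : ℝ) := by
    refine Finset.prod_congr rfl fun j hj => ?_
    have := Finset.ne_of_mem_erase hj
    simp [Pi.single_eq_of_ne this]
  rw [h1, h2]
  simp only [Pi.add_apply, Pi.single_eq_same, ev]
  push_cast
  rw [chs_pascal]; ring

lemma chp_diff_zero {d : ℕ} (β : Fin d → ℕ) (z : Fin d → ℤ) (i : Fin d) (h : β i = 0) :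
    chp β (z + ev i) = chp β z := by
  unfold chp
  refine Finset.prod_congr rfl fun j _ => ?_
  by_cases hj : j = i
  · subst hj; rw [h]; simp [chs]
  · simp [ev, Pi.single_eq_of_ne hj]

/-- Newton polynomial -/
def nwt {d : ℕ} (p : ℕ) (h : (Fin d → ℤ) → ℝ) (z : Fin d → ℤ) : ℝ :=
  ∑ β ∈ mix d p, chp β z * dm (mst β) h 0

lemma nwt_diff {d : ℕ} (p : ℕ) (h : (Fin d → ℤ) → ℝ) (z : Fin d → ℤ) (i : Fin d) :
    nwt (p + 1) h (z + ev i) - nwt (p + 1) h z = nwt p (dl (ev i) h) z := by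
  unfold nwt
  rw [← Finset.sum_sub_distrib]
  simp_rw [← sub_mul]
  have : ∑ β ∈ mix d p, chp β z * dm (mst β) (dl (ev i) h) 0 =
     ∑ β ∈ (mix d p).image (fun β => β + Pi.single i 1),
       (chp β (z + ev i) - chp β z) * dm (mst β) h 0 := by
    rw [Finset.sum_image (fun a _ b _ hab => add_right_cancel hab)]
    refine Finset.sum_congr rfl fun β _ => ?_
    rw [chp_diff, mst_add, dm_cons']
  rw [this]
  symm
  refine Finset.sum_subset ?_ ?_
  · intro β hβ
    obtain ⟨γ, hγ, rfl⟩ := Finset.mem_image.mp hβ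
    rw [mem_mix] at hγ ⊢
    simp only [Pi.add_apply, Finset.sum_add_distrib, Finset.sum_pi_single', Finset.mem_univ, if_true]
    omega
  · intro β hβ hn
    have h0 : β i = 0 := by
      by_contra h0
      apply hn
      refine Finset.mem_image.mpr ⟨β - Pi.single i 1, ?_, ?_⟩
      · rw [mem_mix] at hβ ⊢
        have e : ∑ j, β j = ∑ j, (β - Pi.single i 1 : Fin d → ℕ) j + ∑ j, (Pi.single i 1 : Fin d → ℕ) j := by
          rw [← Finset.sum_add_distrib]
          refine Finset.sum_congr rfl fun j _ => ?_
          by_cases hj : j = i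
          · subst hj; simp; omega
          · simp [Pi.single_eq_of_ne hj]
        simp only [Finset.sum_pi_single', Finset.mem_univ, if_true] at e
        omega
      · funext j
        by_cases hj : j = i
        · subst hj; simp; omega
        · simp [Pi.single_eq_of_ne hj]
    rw [chp_diff_zero _ _ _ h0, sub_self, zero_mul]

lemma nwt_at_zero {d : ℕ} (p : ℕ) (h : (Fin d → ℤ) → ℝ) : nwt (p + 1) h 0 = h 0 := by
  unfold nwt
  rw [Finset.sum_eq_single 0]
  · rw [mst_zero, dm_zero]; simp [chp, chs]
  · intro β _ hβ
    obtain ⟨i, hi⟩ : ∃ i, β i ≠ 0 := by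
      by_contra hc; push Not at hc; exact hβ (funext hc)
    have : chp β 0 = 0 := by
      refine Finset.prod_eq_zero (Finset.mem_univ i) ?_
      obtain ⟨b, hb⟩ := Nat.exists_eq_succ_of_ne_zero hi
      rw [hb]; simpa using chs_zero_right b
    rw [this, zero_mul]
  · intro hn; exfalso; apply hn; rw [mem_mix]; simp

lemma nrm_step {d : ℕ} (z : Fin d → ℤ) (n : ℕ) (h : nrm z = n + 1) :
    ∃ i, nrm (z - ev i) = n ∨ nrm (z + ev i) = n := by
  obtain ⟨i, hi⟩ : ∃ i, z i ≠ 0 := by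
    by_contra hc; push Not at hc
    have : z = 0 := funext hc
    rw [this, nrm_zero] at h; omega
  refine ⟨i, ?_⟩
  unfold nrm at *
  rw [← Finset.add_sum_erase _ _ (Finset.mem_univ i)] at h
  rw [← Finset.add_sum_erase _ _ (Finset.mem_univ i), ← Finset.add_sum_erase (a := i) _ (fun j => ((z + ev i) j).natAbs) (Finset.mem_univ i)]
  have h1 : ∑ j ∈ Finset.univ.erase i, ((z - ev i) j).natAbs = ∑ j ∈ Finset.univ.erase i, (z j).natAbs := by
    refine Finset.sum_congr rfl fun j hj => ?_
    simp [ev, Pi.single_eq_of_ne (Finset.ne_of_mem_erase hj)]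
  have h2 : ∑ j ∈ Finset.univ.erase i, ((z + ev i) j).natAbs = ∑ j ∈ Finset.univ.erase i, (z j).natAbs := by
    refine Finset.sum_congr rfl fun j hj => ?_
    simp [ev, Pi.single_eq_of_ne (Finset.ne_of_mem_erase hj)]
  rw [h1, h2]
  simp only [Pi.sub_apply, Pi.add_apply, ev, Pi.single_eq_same]
  omega

/-- a function with small differences in a ball -/
lemma path_bound {d : ℕ} (E : (Fin d → ℤ) → ℝ) (n k0 : ℕ) (B M : ℝ)
    (hM : ∀ z, nrm z ≤ k0 → |E z| ≤ M) (hB0 : 0 ≤ B) 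
    (hB : ∀ i y, nrm y ≤ n → k0 ≤ nrm y → |dl (ev i) E y| ≤ B) :
    ∀ m : ℕ, m ≤ n → ∀ z, nrm z = m → |E z| ≤ M + B * m := by
  intro m
  induction m with
  | zero => 
    intro _ z hz
    have := hM z (by omega)
    simpa using this
  | succ m ih =>
    intro hm z hz
    by_cases hk : m + 1 ≤ k0
    · have h1 := hM z (by omega)
      have : 0 ≤ B * ((m + 1 : ℕ) : ℝ) := by positivity
      linarith
    obtain ⟨i, hi | hi⟩ := nrm_step z m hz
    · have h1 := ih (by omega) _ hi
      have h2 := hB i _ (by omega : nrm (z - ev i) ≤ n) (by omega)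
      have e : E z = E (z - ev i) + dl (ev i) E (z - ev i) := by simp [dl]
      rw [e]
      refine (abs_add_le _ _).trans ?_
      push_cast; linarith
    · have h1 := ih (by omega) _ hi
      have h2 := hB i _ (by omega : nrm z ≤ n) (by omega)
      have e : E z = E (z + ev i) - dl (ev i) E z := by simp [dl]
      rw [e]
      refine (abs_sub _ _).trans ?_
      push_cast; linarith

lemma newton_taylor {d : ℕ} (n : ℕ) (B : ℝ) (hB : 0 ≤ B) (p : ℕ) : ∀ (h : (Fin d → ℤ) → ℝ),
    (∀ t : Multiset (Fin d), Multiset.card t = p →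
      ∀ y, nrm y ≤ n → |dm (t.map ev) h y| ≤ B) →
    ∀ z, nrm z ≤ n → |h z - nwt p h z| ≤ B * n ^ p := by
  induction p with
  | zero =>
    intro h hh z hz
    have := hh 0 rfl z hz
    rw [Multiset.map_zero, dm_zero] at this
    simpa [nwt, mix] using this
  | succ p ih =>
    intro h hh z hz
    have h1 := path_bound (fun z => h z - nwt (p + 1) h z) n 0 (B * n ^ p) 0
      (fun z hz => by
        rw [nrm_eq_zero (by omega : nrm z = 0), nwt_at_zero]; simp) (by positivity)
      (fun i y hy _ => by
        have e : dl (ev i) (fun z => h z - nwt (p + 1) h z) y =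
            dl (ev i) h y - nwt p (dl (ev i) h) y := by
          rw [← nwt_diff]; simp only [dl]; ring
        rw [e]
        refine ih (dl (ev i) h) (fun s hs y hy => ?_) y hy
        rw [← dm_cons', ← Multiset.map_cons]
        exact hh _ (by simp [hs]) y hy) (nrm z) hz z rfl
    refine h1.trans ?_
    have : (nrm z : ℝ) ≤ n := by exact_mod_cast hz
    rw [zero_add, pow_succ, ← mul_assoc]
    gcongr

lemma chp_bound {d : ℕ} (β : Fin d → ℕ) (z : Fin d → ℤ) : |chp β z| ≤ wt z ^ (∑ i, β i) := by
  unfold chp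
  rw [Finset.abs_prod, ← Finset.prod_pow_eq_pow_sum]
  refine Finset.prod_le_prod (fun _ _ => abs_nonneg _) fun i _ => (chs_bound _ _).trans ?_
  have := abs_le_nrm z i
  unfold wt
  exact pow_le_pow_left₀ (by positivity) (by linarith) _



/-- cutoff around the origin at scale `wt l` -/
def eta {d : ℕ} (l k : Fin d → ℤ) : ℝ := max 0 (min 1 (2 - nrm k / (wt l / 8)))

lemma eta_nonneg {d : ℕ} (l k : Fin d → ℤ) : 0 ≤ eta l k := le_max_left _ _

lemma eta_le_one {d : ℕ} (l k : Fin d → ℤ) : eta l k ≤ 1 :=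
  max_le zero_le_one (min_le_left _ _)

lemma eta_eq_zero {d : ℕ} (l k : Fin d → ℤ) (h : wt l / 4 ≤ nrm k) : eta l k = 0 := by
  unfold eta
  refine max_eq_left ((min_le_right _ _).trans ?_)
  have h1 := wt_pos l
  rw [sub_nonpos, le_div_iff₀ (by positivity)]
  linarith

lemma eta_eq_one {d : ℕ} (l k : Fin d → ℤ) (h : (nrm k : ℝ) ≤ wt l / 8) : eta l k = 1 := by
  unfold eta
  have h1 := wt_pos l
  have : (nrm k : ℝ) / (wt l / 8) ≤ 1 := (div_le_one (by positivity)).mpr h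
  rw [min_eq_left (by linarith), max_eq_right zero_le_one]

lemma eta_lip {d : ℕ} (l k r : Fin d → ℤ) : |eta l (k - r) - eta l k| ≤ 8 * nrm r / wt l := by
  have h1 := wt_pos l
  unfold eta
  have h2 := abs_min_sub_min_le_max 1 (2 - (nrm (k - r) : ℝ) / (wt l / 8)) 1 (2 - (nrm k : ℝ) / (wt l / 8))
  rw [max_comm (0:ℝ), max_comm (0:ℝ)]
  refine (abs_max_sub_max_le_abs _ _ _).trans (h2.trans ?_)
  rw [sub_self, abs_zero, max_eq_right (abs_nonneg _)]
  have e : 2 - (nrm (k - r) : ℝ) / (wt l / 8) - (2 - (nrm k : ℝ) / (wt l / 8)) = 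
     8 * ((nrm k : ℝ) - nrm (k - r)) / wt l := by field_simp; ring
  rw [e, abs_div, abs_of_pos h1, abs_mul]
  gcongr
  · norm_num
  · have a1 : nrm k ≤ nrm (k - r) + nrm r := by
      have := nrm_add (k - r) r; simpa using this
    have a2 : nrm (k - r) ≤ nrm k + nrm r := by
      have := nrm_add k (-r); rw [nrm_neg, ← sub_eq_add_neg] at this; exact this
    have a1' : (nrm k : ℝ) ≤ nrm (k - r) + nrm r := by exact_mod_cast a1
    have a2' : (nrm (k - r) : ℝ) ≤ nrm k + nrm r := by exact_mod_cast a2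
    rw [abs_le]; constructor <;> linarith

lemma nrm_sub_ge {d : ℕ} (l k : Fin d → ℤ) : (nrm l : ℝ) - nrm k ≤ nrm (l - k) := by
  have := nrm_add (l - k) k
  rw [sub_add_cancel] at this
  have h : (nrm l : ℝ) ≤ nrm (l - k) + nrm k := by exact_mod_cast this
  linarith

lemma unif_sym {d : ℕ} (p : ℕ) (g B : (Fin d → ℤ) → ℝ) (hB : ∀ x, 0 ≤ B x) (φ : Multiset (Fin d) → Multiset (Fin d → ℤ))
    (h : ∀ t : Multiset (Fin d), Multiset.card t = p → ∃ C, ∀ x, |dm (φ t) g x| ≤ C * B x) :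
    ∃ C, 0 ≤ C ∧ ∀ t : Multiset (Fin d), Multiset.card t = p → ∀ x, |dm (φ t) g x| ≤ C * B x := by
  have h' : ∀ t : Sym (Fin d) p, ∃ C, ∀ x, |dm (φ t.1) g x| ≤ C * B x := fun t => h t.1 t.2
  choose C hC using h'
  refine ⟨∑ t, |C t|, Finset.sum_nonneg fun _ _ => abs_nonneg _, fun t ht x => ?_⟩
  refine (hC ⟨t, ht⟩ x).trans (mul_le_mul_of_nonneg_right ?_ (hB x))
  exact (le_abs_self _).trans (Finset.single_le_sum (f := fun t => |C t|) (fun _ _ => abs_nonneg _) (Finset.mem_univ _))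

lemma far_pt {d : ℕ} (q p : ℕ) (g : (Fin d → ℤ) → ℝ)
    (hg : ∀ s : Multiset (Fin d → ℤ), ∃ C, ∀ x, |dm s g x| ≤ C * (1 / wt x ^ (q + Multiset.card s))) :
    ∃ C, 0 ≤ C ∧ ∀ l m, |g (l - m) - nwt p (fun m => g (l - m)) m - eta l (l - m) * g (l - m)|
      ≤ C * (1 / wt l ^ (q + p)) * wt m ^ p := by
  obtain ⟨C1, hC1, h1⟩ := unif_sym p g (fun x => 1 / wt x ^ (q + p))
    (fun x => by have := wt_pos x; positivity) (fun t => (t.map ev).map (fun r => -r))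
    (fun t ht => by
      obtain ⟨C, hC⟩ := hg ((t.map ev).map (fun r => -r))
      refine ⟨C, fun x => ?_⟩
      have := hC x
      simpa [ht] using this)
  obtain ⟨C0, h0⟩ := hg 0
  have hb : ∀ β : Fin d → ℕ, ∃ C, ∀ x, |dm ((mst β).map (fun r => -r)) g x| ≤ C * (1 / wt x ^ (q + ∑ i, β i)) := by
    intro β
    obtain ⟨C, hC⟩ := hg ((mst β).map (fun r => -r))
    exact ⟨C, fun x => by simpa [mst_card] using hC x⟩
  choose Cb hCb using hb
  -- elementary comparison
  have cmp : ∀ l m : Fin d → ℤ, wt l / 2 ≤ wt m → ∀ b ≤ p,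
      1 / wt l ^ (q + b) * wt m ^ b ≤ 2 ^ p * (1 / wt l ^ (q + p)) * wt m ^ p := by
    intro l m hlm b hb
    have hl := wt_pos l
    have hm := wt_pos m
    have e1 : 1 / wt l ^ (q + b) * wt m ^ b = (1 / wt l ^ q) * (wt m / wt l) ^ b := by
      rw [pow_add, div_pow]; field_simp
    have e2 : 2 ^ p * (1 / wt l ^ (q + p)) * wt m ^ p = (1 / wt l ^ q) * (2 * (wt m / wt l)) ^ p := by
      rw [pow_add, mul_pow, div_pow]; field_simp
    rw [e1, e2]
    have h3 : 1 ≤ 2 * (wt m / wt l) := by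
      rw [← mul_div_assoc, le_div_iff₀ hl]; linarith
    refine mul_le_mul_of_nonneg_left ?_ (by positivity)
    calc (wt m / wt l) ^ b ≤ (2 * (wt m / wt l)) ^ b := by
          refine pow_le_pow_left₀ (by positivity) ?_ _
          have : 0 < wt m / wt l := by positivity
          linarith
      _ ≤ _ := pow_le_pow_right₀ h3 hb
  refine ⟨C1 * 2 ^ (q + p) + (|C0| * 8 ^ q * 2 ^ p + ∑ β ∈ mix d p, |Cb β| * 2 ^ p), by positivity, fun l m => ?_⟩
  have hl := wt_pos l
  have hm := wt_pos m
  set X := (1 / wt l ^ (q + p)) * wt m ^ p with hX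
  have hX0 : 0 ≤ X := by positivity
  rw [mul_assoc, ← hX]
  by_cases hlm : wt l / 2 ≤ wt m
  · have a1 : |(1 - eta l (l - m)) * g (l - m)| ≤ |C0| * 8 ^ q * 2 ^ p * X := by
      by_cases hk : (nrm (l - m) : ℝ) ≤ wt l / 8
      · rw [eta_eq_one _ _ hk]; simp; positivity
      push Not at hk
      have hw : wt l / 8 ≤ wt (l - m) := by unfold wt at *; linarith
      have hw' := wt_pos (l - m)
      have b1 := h0 (l - m)
      rw [dm_zero] at b1
      rw [abs_mul]
      have b2 : |1 - eta l (l - m)| ≤ 1 := by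
        rw [abs_le]; constructor <;> linarith [eta_nonneg l (l-m), eta_le_one l (l-m)]
      calc |1 - eta l (l - m)| * |g (l - m)| ≤ 1 * |g (l - m)| := by gcongr
        _ ≤ |C0| * (1 / wt (l - m) ^ q) := by
            rw [one_mul]
            refine b1.trans ?_
            simp only [Multiset.card_zero, add_zero]
            gcongr
            exact le_abs_self _
        _ ≤ |C0| * (1 / (wt l / 8) ^ q) := by gcongr
        _ = |C0| * 8 ^ q * (1 / wt l ^ (q + 0) * wt m ^ 0) := by rw [div_pow]; field_simp; simp
        _ ≤ |C0| * 8 ^ q * (2 ^ p * (1 / wt l ^ (q + p)) * wt m ^ p) := by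
            exact mul_le_mul_of_nonneg_left (cmp l m hlm 0 (Nat.zero_le _)) (by positivity)
        _ = _ := by rw [hX]; ring
    have a2 : |nwt p (fun m => g (l - m)) m| ≤ (∑ β ∈ mix d p, |Cb β| * 2 ^ p) * X := by
      unfold nwt
      refine (Finset.abs_sum_le_sum_abs _ _).trans ?_
      rw [Finset.sum_mul]
      refine Finset.sum_le_sum fun β hβ => ?_
      rw [mem_mix] at hβ
      rw [abs_mul, dm_reflect, sub_zero]
      calc |chp β m| * |dm ((mst β).map (fun r => -r)) g l|
          ≤ wt m ^ (∑ i, β i) * (|Cb β| * (1 / wt l ^ (q + ∑ i, β i))) := by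
            gcongr
            · exact chp_bound β m
            · refine (hCb β l).trans ?_
              gcongr
              exact le_abs_self _
        _ = |Cb β| * (1 / wt l ^ (q + ∑ i, β i) * wt m ^ (∑ i, β i)) := by ring
        _ ≤ |Cb β| * (2 ^ p * (1 / wt l ^ (q + p)) * wt m ^ p) := by
            exact mul_le_mul_of_nonneg_left (cmp l m hlm _ hβ.le) (by positivity)
        _ = _ := by rw [hX]; ring
    have e : g (l - m) - nwt p (fun m => g (l - m)) m - eta l (l - m) * g (l - m) =
      (1 - eta l (l - m)) * g (l - m) - nwt p (fun m => g (l - m)) m := by ring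
    rw [e]
    refine (abs_sub _ _).trans ?_
    have : 0 ≤ C1 * 2 ^ (q + p) * X := by positivity
    nlinarith
  · push Not at hlm
    have k1 := nrm_sub_ge l m
    have e0 : eta l (l - m) = 0 := by
      apply eta_eq_zero
      unfold wt at *; linarith
    rw [e0, zero_mul, sub_zero]
    have t := newton_taylor (nrm m) (C1 * (2 ^ (q + p) * (1 / wt l ^ (q + p)))) (by positivity) p
      (fun m => g (l - m)) (fun t ht y hy => by
        rw [dm_reflect]
        refine (h1 t ht _).trans ?_
        gcongr
        have k2 := nrm_sub_ge l y
        have k3 : (nrm y : ℝ) ≤ nrm m := by exact_mod_cast hy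
        have hw : wt l / 2 ≤ wt (l - y) := by unfold wt at *; linarith
        have hw' := wt_pos (l - y)
        calc 1 / wt (l - y) ^ (q + p) ≤ 1 / (wt l / 2) ^ (q + p) := by gcongr
          _ = _ := by rw [div_pow]; field_simp) m le_rfl
    refine t.trans ?_
    have b : (nrm m : ℝ) ^ p ≤ wt m ^ p := by
      gcongr; unfold wt; linarith
    calc C1 * (2 ^ (q + p) * (1 / wt l ^ (q + p))) * (nrm m : ℝ) ^ p
        ≤ C1 * (2 ^ (q + p) * (1 / wt l ^ (q + p))) * wt m ^ p := by gcongr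
      _ = C1 * 2 ^ (q + p) * X := by rw [hX]; ring
      _ ≤ _ := by
        refine mul_le_mul_of_nonneg_right ?_ hX0
        have : (0:ℝ) ≤ |C0| * 8 ^ q * 2 ^ p + ∑ β ∈ mix d p, |Cb β| * 2 ^ p := by positivity
        linarith

lemma far_sum {d : ℕ} (q p : ℕ) (g : (Fin d → ℤ) → ℝ)
    (hg : ∀ s : Multiset (Fin d → ℤ), ∃ C, ∀ x, |dm s g x| ≤ C * (1 / wt x ^ (q + Multiset.card s)))
    (f : (Fin d → ℤ) → ℝ) (hf : Summable fun m => wt m ^ p * |f m|)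
    (hmom : ∀ β : Fin d → ℕ, ∑ i, β i < p → HasSum (fun m => f m * chp β m) 0) :
    ∃ C, ∀ l, |∑' m, g (l - m) * f m - ∑' m, eta l (l - m) * g (l - m) * f m|
      ≤ C * (1 / wt l ^ (q + p)) := by
  obtain ⟨C, hC, hpt⟩ := far_pt q p g hg
  obtain ⟨C0, h0⟩ := hg 0
  have hfs : Summable fun m => |f m| := by
    refine Summable.of_nonneg_of_le (fun _ => abs_nonneg _) (fun m => ?_) hf
    have := two_le_wt m
    have h1 : 1 ≤ wt m ^ p := one_le_pow₀ (by linarith)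
    nlinarith [abs_nonneg (f m)]
  have hgb : ∀ x, |g x| ≤ |C0| := by
    intro x
    have := h0 x
    rw [dm_zero] at this
    refine this.trans ?_
    have h1 : 1 ≤ wt x ^ (q + 0) := one_le_pow₀ (by linarith [two_le_wt x])
    calc C0 * (1 / wt x ^ (q + Multiset.card (0 : Multiset (Fin d → ℤ)))) ≤ |C0| * 1 := by
          refine mul_le_mul (le_abs_self _) ?_ ?_ (abs_nonneg _)
          · rw [Multiset.card_zero]; exact div_le_one_of_le₀ h1 (by linarith)
          · have := wt_pos x; positivity
      _ = _ := mul_one _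
  refine ⟨C * ∑' m, wt m ^ p * |f m|, fun l => ?_⟩
  have s1 : Summable (fun m => g (l - m) * f m) := by
    refine Summable.of_norm_bounded (hfs.mul_left |C0|) (fun m => ?_)
    rw [Real.norm_eq_abs, abs_mul]
    exact mul_le_mul_of_nonneg_right (hgb _) (abs_nonneg _)
  have s2 : Summable (fun m => eta l (l - m) * g (l - m) * f m) := by
    refine Summable.of_norm_bounded (hfs.mul_left |C0|) (fun m => ?_)
    rw [Real.norm_eq_abs, abs_mul, abs_mul, abs_of_nonneg (eta_nonneg _ _)]
    gcongr
    calc _ ≤ 1 * |C0| := mul_le_mul (eta_le_one _ _) (hgb _) (abs_nonneg _) zero_le_one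
      _ = _ := one_mul _
  have s3 : HasSum (fun m => nwt p (fun m => g (l - m)) m * f m) 0 := by
    have : (fun m => nwt p (fun m => g (l - m)) m * f m) =
        fun m => ∑ β ∈ mix d p, (f m * chp β m) * dm (mst β) (fun m => g (l - m)) 0 := by
      funext m
      unfold nwt
      rw [Finset.sum_mul]
      exact Finset.sum_congr rfl fun β _ => by ring
    rw [this]
    have h := hasSum_sum (s := mix d p) (fun β hβ => (hmom β ((mem_mix β).mp hβ)).mul_right (dm (mst β) (fun m => g (l - m)) 0))
    simpa using h
  have e := ((s1.hasSum.sub s3).sub s2.hasSum)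
  rw [sub_zero] at e
  rw [← e.tsum_eq, ← Real.norm_eq_abs]
  have hb : HasSum (fun m => C * (1 / wt l ^ (q + p)) * (wt m ^ p * |f m|)) (C * (1 / wt l ^ (q + p)) * ∑' m, wt m ^ p * |f m|) :=
    hf.hasSum.mul_left _
  refine (tsum_of_norm_bounded hb fun m => ?_).trans (le_of_eq (by ring))
  rw [← sub_mul, ← sub_mul, Real.norm_eq_abs, abs_mul, ← mul_assoc]
  gcongr
  exact hpt l m



lemma finite_wt_le {d : ℕ} (X : ℝ) : {z : Fin d → ℤ | wt z ≤ X}.Finite := by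
  refine (finite_nrm_le ⌊X⌋₊).subset fun z hz => Nat.le_floor ?_
  have : wt z ≤ X := hz
  unfold wt at this
  linarith

lemma tsum_ball {d : ℕ} (X B : ℝ) (F H : (Fin d → ℤ) → ℝ) (h0 : ∀ k, ¬ wt k ≤ X → F k = 0)
    (hF : ∀ k, wt k ≤ X → |F k| ≤ H k)
    (hB : ∀ s : Finset (Fin d → ℤ), (∀ z ∈ s, wt z ≤ X) → ∑ z ∈ s, H z ≤ B) :
    |∑' k, F k| ≤ B := by
  have hm : ∀ k, k ∈ (finite_wt_le (d := d) X).toFinset ↔ wt k ≤ X := fun k => by simp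
  rw [tsum_eq_sum (s := (finite_wt_le (d := d) X).toFinset) (fun k hk => h0 k (by rwa [hm] at hk))]
  refine (Finset.abs_sum_le_sum_abs _ _).trans ?_
  refine (Finset.sum_le_sum fun k hk => hF k ((hm k).mp hk)).trans ?_
  exact hB _ fun z hz => (hm z).mp hz

lemma summable_ball {d : ℕ} (X : ℝ) (F : (Fin d → ℤ) → ℝ) (h0 : ∀ k, ¬ wt k ≤ X → F k = 0) :
    Summable F :=
  summable_of_hasFiniteSupport ((finite_wt_le X).subset fun k hk => by
    by_contra hc; exact hk (h0 k hc))

lemma eta_supp {d : ℕ} (l k : Fin d → ℤ) (h : ¬ wt k ≤ 2 * wt l) : eta l k = 0 := by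
  apply eta_eq_zero
  have := two_le_wt l
  push Not at h
  unfold wt at *
  linarith

lemma eta_near {d : ℕ} (l k : Fin d → ℤ) (h : eta l k ≠ 0) : 3 / 4 * wt l ≤ wt (l - k) := by
  have h1 : (nrm k : ℝ) < wt l / 4 := by
    by_contra hc; push Not at hc; exact h (eta_eq_zero l k hc)
  have h2 := nrm_sub_ge l k
  unfold wt at *
  linarith

lemma nonneg_const {d : ℕ} {F B : (Fin d → ℤ) → ℝ} (hB : ∀ x, 0 ≤ B x) (h : ∃ C, ∀ x, |F x| ≤ C * B x) :
    ∃ C, 0 ≤ C ∧ ∀ x, |F x| ≤ C * B x := by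
  obtain ⟨C, hC⟩ := h
  exact ⟨|C|, abs_nonneg _, fun x => (hC x).trans (mul_le_mul_of_nonneg_right (le_abs_self _) (hB x))⟩

lemma near_one {d : ℕ} (hd : 1 ≤ d) (p : ℕ) (g f : (Fin d → ℤ) → ℝ)
    (hg : ∃ C, ∀ x, |g x| ≤ C * (1 / wt x ^ (d - 1)))
    (hf : ∃ C, ∀ x, |f x| ≤ C * (1 / wt x ^ (d + p))) :
    ∃ C, ∀ l, |∑' k, eta l k * g k * f (l - k)| ≤ C * (1 / wt l ^ (d - 1 + p)) := by
  obtain ⟨C1, h10, h1⟩ := nonneg_const (slow_pow _).1 hg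
  obtain ⟨C2, h20, h2⟩ := nonneg_const (slow_pow _).1 hf
  refine ⟨(4 * 5 ^ d) * 2 * C1 * C2 * 2 ^ (d + p), fun l => ?_⟩
  have hl := wt_pos l
  refine tsum_ball (2 * wt l) _ _ (fun k => 1 / wt k ^ (d - 1) * (C1 * (C2 * (2 ^ (d + p) / wt l ^ (d + p)))))
    (fun k hk => by rw [eta_supp l k hk]; ring) (fun k hk => ?_) (fun s hs => ?_)
  · have hk0 := wt_pos k
    by_cases he : eta l k = 0
    · rw [he]; simp; positivity
    have hn := eta_near l k he
    have hw := wt_pos (l - k)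
    rw [abs_mul, abs_mul, abs_of_nonneg (eta_nonneg _ _)]
    have a : |f (l - k)| ≤ C2 * (2 ^ (d + p) / wt l ^ (d + p)) := by
      refine (h2 _).trans ?_
      refine mul_le_mul_of_nonneg_left ?_ h20
      rw [div_le_div_iff₀ (by positivity) (by positivity), one_mul, ← mul_pow]
      exact pow_le_pow_left₀ hl.le (by linarith) _
    calc eta l k * |g k| * |f (l - k)| ≤ 1 * (C1 * (1 / wt k ^ (d - 1))) * (C2 * (2 ^ (d + p) / wt l ^ (d + p))) := by
          gcongr
          · exact eta_le_one _ _
          · exact h1 k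
      _ = _ := by ring
  · rw [← Finset.sum_mul]
    have := sum_S1 hd s (2 * wt l) (by linarith [two_le_wt l]) hs
    calc _ ≤ (4 * 5 ^ d) * (2 * wt l) * (C1 * (C2 * (2 ^ (d + p) / wt l ^ (d + p)))) := by gcongr
      _ = _ := by
        have : wt l ^ (d + p) = wt l ^ (d - 1 + p) * wt l := by rw [← pow_succ]; congr 1; omega
        rw [this]; field_simp

lemma near_base {d : ℕ} (p : ℕ) (g f : (Fin d → ℤ) → ℝ)
    (hg : ∃ C, ∀ x, |g x| ≤ C * (1 / wt x ^ d))
    (hf : ∃ C, ∀ x, |f x| ≤ C * (1 / (wt x ^ (d + p) * Real.log (wt x)))) :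
    ∃ C, ∀ l, |∑' k, eta l k * g k * f (l - k)| ≤ C * (1 / wt l ^ (d + p)) := by
  obtain ⟨C1, h10, h1⟩ := nonneg_const (slow_pow _).1 hg
  obtain ⟨C2, h20, h2⟩ := nonneg_const (slow_pow_log _).1 hf
  refine ⟨(2 * 5 ^ d / Real.log 2) * 4 * C1 * C2 * 2 ^ (d + p), fun l => ?_⟩
  have hl := wt_pos l
  have hl2 := two_le_wt l
  have hll := log_wt_pos l
  have hlog2 : 0 < Real.log 2 := Real.log_pos (by norm_num)
  refine tsum_ball (2 * wt l) _ _ (fun k => 1 / wt k ^ d * (C1 * (C2 * (2 ^ (d + p) * 2 / (wt l ^ (d + p) * Real.log (wt l))))))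
    (fun k hk => by rw [eta_supp l k hk]; ring) (fun k hk => ?_) (fun s hs => ?_)
  · have hk0 := wt_pos k
    by_cases he : eta l k = 0
    · rw [he]; simp; positivity
    have hn := eta_near l k he
    have hw := wt_pos (l - k)
    have hw2 := two_le_wt (l - k)
    have hwl := log_wt_pos (l - k)
    rw [abs_mul, abs_mul, abs_of_nonneg (eta_nonneg _ _)]
    have a : |f (l - k)| ≤ C2 * (2 ^ (d + p) * 2 / (wt l ^ (d + p) * Real.log (wt l))) := by
      refine (h2 _).trans ?_
      refine mul_le_mul_of_nonneg_left ?_ h20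
      rw [div_le_div_iff₀ (by positivity) (by positivity), one_mul]
      have b1 : wt l ^ (d + p) ≤ 2 ^ (d + p) * wt (l - k) ^ (d + p) := by
        rw [← mul_pow]
        exact pow_le_pow_left₀ hl.le (by linarith) _
      have b2 : Real.log (wt l) ≤ 2 * Real.log (wt (l - k)) := by
        have : wt l ≤ wt (l - k) ^ 2 := by nlinarith
        have := Real.log_le_log hl this
        rwa [Real.log_pow] at this
      calc _ ≤ (2 ^ (d + p) * wt (l - k) ^ (d + p)) * (2 * Real.log (wt (l - k))) := by gcongr
        _ = _ := by ring
    calc eta l k * |g k| * |f (l - k)| ≤ 1 * (C1 * (1 / wt k ^ d)) * (C2 * (2 ^ (d + p) * 2 / (wt l ^ (d + p) * Real.log (wt l)))) := by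
          gcongr
          · exact eta_le_one _ _
          · exact h1 k
      _ = _ := by ring
  · rw [← Finset.sum_mul]
    have := sum_S0 s (2 * wt l) (by linarith) hs
    have b2 : Real.log (2 * wt l) ≤ 2 * Real.log (wt l) := by
      have : 2 * wt l ≤ wt l ^ 2 := by nlinarith
      have := Real.log_le_log (by positivity) this
      rwa [Real.log_pow] at this
    calc _ ≤ (2 * 5 ^ d / Real.log 2) * (2 * Real.log (wt l)) * (C1 * (C2 * (2 ^ (d + p) * 2 / (wt l ^ (d + p) * Real.log (wt l))))) := by
          gcongr
          refine this.trans ?_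
          gcongr
      _ = _ := by
        field_simp; norm_num; ring

lemma near_bdry {d : ℕ} (p n : ℕ) (g f : (Fin d → ℤ) → ℝ) (r : Fin d → ℤ)
    (hg : ∃ C, ∀ x, |g x| ≤ C * (1 / wt x ^ (d + n)))
    (hf : ∃ C, ∀ x, |f x| ≤ C * (1 / wt x ^ (d + p))) :
    ∃ C, ∀ l, |∑' k, g k * f (l - (k - r)) * (eta l (k - r) - eta l k)| ≤ C * (1 / wt l ^ (d + p + (n + 1))) := by
  obtain ⟨C1, h10, h1⟩ := nonneg_const (slow_pow _).1 hg
  obtain ⟨C2, h20, h2⟩ := nonneg_const (slow_pow _).1 hf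
  have hr0 : (0:ℝ) ≤ nrm r := Nat.cast_nonneg _
  set ρ : ℝ := 1 + nrm r with hρ
  have hρ0 : 0 < ρ := by positivity
  refine ⟨(3 * (2 * ρ)) ^ d * C1 * (8 * ρ) ^ (d + n) * C2 * (2 * ρ) ^ (d + p) * (8 * ρ), fun l => ?_⟩
  have hl := wt_pos l
  have hl2 := two_le_wt l
  have hne : ∀ k, eta l (k - r) - eta l k ≠ 0 → wt k ≤ 2 * ρ * wt l ∧ wt l ≤ 8 * ρ * wt k ∧
      wt l ≤ 2 * ρ * wt (l - (k - r)) := by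
    intro k hk
    have a1 : (nrm k : ℝ) ≤ nrm (k - r) + nrm r := by
      have := nrm_add (k - r) r; rw [sub_add_cancel] at this; exact_mod_cast this
    have a2 : (nrm (k - r) : ℝ) ≤ nrm k + nrm r := by
      have := nrm_add k (-r); rw [nrm_neg, ← sub_eq_add_neg] at this; exact_mod_cast this
    have c1 : (nrm (k - r) : ℝ) < wt l / 4 + nrm r := by
      by_contra hc; push Not at hc
      apply hk
      rw [eta_eq_zero l k (by linarith), eta_eq_zero l (k - r) (by linarith), sub_self]
    have c2 : wt l / 8 < nrm k + nrm r := by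
      by_contra hc; push Not at hc
      apply hk
      rw [eta_eq_one l k (by linarith), eta_eq_one l (k - r) (by linarith), sub_self]
    have c3 := nrm_sub_ge l (k - r)
    have k0 : (0:ℝ) ≤ nrm k := Nat.cast_nonneg _
    have k1 : (0:ℝ) ≤ nrm l := Nat.cast_nonneg _
    have k2 : (0:ℝ) ≤ nrm (l - (k - r)) := Nat.cast_nonneg _
    have m1 := mul_nonneg hr0 k0
    have m2 := mul_nonneg hr0 k1
    have m3 := mul_nonneg hr0 k2
    unfold wt at *
    rw [hρ]
    refine ⟨?_, ?_, ?_⟩ <;> nlinarith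
  refine tsum_ball (2 * ρ * wt l) _ _ (fun k => C1 * ((8 * ρ) ^ (d + n) / wt l ^ (d + n)) * (C2 * ((2 * ρ) ^ (d + p) / wt l ^ (d + p))) * (8 * ρ / wt l))
    (fun k hk => ?_) (fun k hk => ?_) (fun s hs => ?_)
  · by_cases he : eta l (k - r) - eta l k = 0
    · rw [he, mul_zero]
    · exact absurd (hne k he).1 hk
  · by_cases he : eta l (k - r) - eta l k = 0
    · rw [he, mul_zero, abs_zero]; positivity
    obtain ⟨_, e2, e3⟩ := hne k he
    have hk0 := wt_pos k
    have hw := wt_pos (l - (k - r))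
    rw [abs_mul, abs_mul]
    have b1 : |g k| ≤ C1 * ((8 * ρ) ^ (d + n) / wt l ^ (d + n)) := by
      refine (h1 _).trans ?_
      refine mul_le_mul_of_nonneg_left ?_ h10
      rw [div_le_div_iff₀ (by positivity) (by positivity), one_mul, ← mul_pow]
      exact pow_le_pow_left₀ hl.le e2 _
    have b2 : |f (l - (k - r))| ≤ C2 * ((2 * ρ) ^ (d + p) / wt l ^ (d + p)) := by
      refine (h2 _).trans ?_
      refine mul_le_mul_of_nonneg_left ?_ h20
      rw [div_le_div_iff₀ (by positivity) (by positivity), one_mul, ← mul_pow]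
      exact pow_le_pow_left₀ hl.le e3 _
    have b3 : |eta l (k - r) - eta l k| ≤ 8 * ρ / wt l := by
      refine (eta_lip l k r).trans ?_
      gcongr
      linarith
    gcongr
  · rw [Finset.sum_const, nsmul_eq_mul]
    have hc := card_wt s (2 * ρ * wt l) (by nlinarith) hs
    calc _ ≤ (3 * (2 * ρ * wt l)) ^ d * (C1 * ((8 * ρ) ^ (d + n) / wt l ^ (d + n)) * (C2 * ((2 * ρ) ^ (d + p) / wt l ^ (d + p))) * (8 * ρ / wt l)) := by
          gcongr
      _ = _ := by
        rw [show 3 * (2 * ρ * wt l) = (3 * (2 * ρ)) * wt l by ring, mul_pow _ (wt l)]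
        have : wt l ^ (d + p + (n + 1)) * wt l ^ d = wt l ^ (d + n) * wt l ^ (d + p) * wt l := by
          rw [← pow_add, ← pow_add, ← pow_succ]; congr 1; omega
        generalize (3 * (2 * ρ)) ^ d = Q1
        generalize (8 * ρ) ^ (d + n) = Q2
        generalize (2 * ρ) ^ (d + p) = Q3
        have p1 : wt l ^ (d + n) ≠ 0 := by positivity
        have p2 : wt l ^ (d + p) ≠ 0 := by positivity
        have p3 : wt l ^ (d + p + (n + 1)) ≠ 0 := by positivity
        generalize wt l ^ (d + p + (n + 1)) = W1 at *
        generalize wt l ^ (d + n) = W2 at *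
        generalize wt l ^ (d + p) = W3 at *
        generalize wt l ^ d = W4 at *
        field_simp
        linear_combination (Q1 * C1 * Q2 * C2 * Q3) * this

lemma log_drop {d : ℕ} (n : ℕ) (F : (Fin d → ℤ) → ℝ)
    (h : ∃ C, ∀ x, |F x| ≤ C * (1 / (wt x ^ n * Real.log (wt x)))) :
    ∃ C, ∀ x, |F x| ≤ C * (1 / wt x ^ n) := by
  obtain ⟨C, h0, hC⟩ := nonneg_const (slow_pow_log _).1 h
  have hlog2 : 0 < Real.log 2 := Real.log_pos (by norm_num)
  refine ⟨C / Real.log 2, fun x => (hC x).trans ?_⟩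
  have := wt_pos x
  have h2 := log_wt_pos x
  have h1 : Real.log 2 ≤ Real.log (wt x) := Real.log_le_log (by norm_num) (two_le_wt _)
  calc C * (1 / (wt x ^ n * Real.log (wt x))) ≤ C * (1 / (wt x ^ n * Real.log 2)) := by gcongr
    _ = _ := by field_simp

lemma near_ind {d : ℕ} (n : ℕ) : ∀ (p : ℕ) (g f : (Fin d → ℤ) → ℝ),
    (∀ s : Multiset (Fin d → ℤ), ∃ C, ∀ x, |dm s g x| ≤ C * (1 / wt x ^ (d + Multiset.card s))) →
    (∀ s : Multiset (Fin d → ℤ), Multiset.card s ≤ n →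
      ∃ C, ∀ x, |dm s f x| ≤ C * (1 / (wt x ^ (d + p + Multiset.card s) * Real.log (wt x)))) →
    ∀ s : Multiset (Fin d → ℤ), Multiset.card s = n →
    ∃ C, ∀ l, |∑' k, eta l k * dm s g k * f (l - k)| ≤ C * (1 / wt l ^ (d + p + n)) := by
  induction n with
  | zero =>
    intro p g f hg hf s hs
    rw [Multiset.card_eq_zero] at hs
    subst hs
    have a := hg 0
    have b := hf 0 (by simp)
    simp only [dm_zero, Multiset.card_zero, add_zero] at a b ⊢
    exact near_base p g f a b
  | succ n ih =>
    intro p g f hg hf s hs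
    obtain ⟨r, hr0⟩ := Multiset.card_pos_iff_exists_mem.mp (by omega : 0 < Multiset.card s)
    obtain ⟨s, rfl⟩ := Multiset.exists_cons_of_mem hr0
    clear hr0
    have hs' : Multiset.card s = n := by simpa using hs
    obtain ⟨C1, h1⟩ := ih (p + 1) g (dl r f) hg (fun t ht => by
      rw [← dm_cons']
      have := hf (r ::ₘ t) (by simpa using ht)
      rw [Multiset.card_cons] at this
      rwa [show d + (p + 1) + Multiset.card t = d + p + (Multiset.card t + 1) by omega]) s hs'
    obtain ⟨C2, h2⟩ := near_bdry p n (dm s g) f r (by have := hg s; rwa [hs'] at this)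
      (log_drop _ _ (by have := hf 0 (by simp); simpa [dm_zero] using this))
    refine ⟨C1 + C2, fun l => ?_⟩
    have e : ∑' k, eta l k * dm (r ::ₘ s) g k * f (l - k) =
        ∑' k, eta l k * dm s g k * dl r f (l - k) +
        ∑' k, dm s g k * f (l - (k - r)) * (eta l (k - r) - eta l k) := by
      set G1 := dm s g
      have z1 : ∀ k, ¬ wt k ≤ 2 * wt l → eta l k = 0 := fun k hk => eta_supp l k hk
      have s1 : Summable fun k => eta l k * f (l - k) * G1 k :=
        summable_ball (2 * wt l) _ (fun k hk => by rw [z1 k hk]; ring)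
      have s2 : Summable fun k => eta l k * f (l - k) * G1 (k + r) :=
        summable_ball (2 * wt l) _ (fun k hk => by rw [z1 k hk]; ring)
      have s3 : Summable fun k => eta l k * G1 k * dl r f (l - k) :=
        summable_ball (2 * wt l) _ (fun k hk => by rw [z1 k hk]; ring)
      have s2' : Summable fun k => eta l (k - r) * f (l - (k - r)) * G1 k := by
        have := (Equiv.subRight r).summable_iff.mpr s2
        refine this.congr fun k => ?_
        simp
      have t2 : ∑' k, eta l k * f (l - k) * G1 (k + r) = ∑' k, eta l (k - r) * f (l - (k - r)) * G1 k := by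
        rw [← (Equiv.subRight r).tsum_eq]
        refine tsum_congr fun k => ?_
        simp
      have e1 : ∀ k, eta l k * dm (r ::ₘ s) g k * f (l - k) = eta l k * f (l - k) * G1 (k + r) - eta l k * f (l - k) * G1 k := by
        intro k; rw [dm_cons]; simp only [dl]; ring
      have e2 : ∀ k, G1 k * f (l - (k - r)) * (eta l (k - r) - eta l k) =
        eta l (k - r) * f (l - (k - r)) * G1 k - eta l k * f (l - k) * G1 k - eta l k * G1 k * dl r f (l - k) := by
        intro k; simp only [dl]; rw [show l - (k - r) = l - k + r by abel]; ring
      rw [tsum_congr e1, tsum_congr e2, s2.tsum_sub s1, (s2'.sub s1).tsum_sub s3, s2'.tsum_sub s1, t2]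
      ring
    rw [e]
    refine (abs_add_le _ _).trans ?_
    have a := h1 l
    have b := h2 l
    rw [show d + (p + 1) + n = d + p + (n + 1) by omega] at a
    rw [add_mul]
    exact add_le_add a b



/-- squared length -/
def qd {d : ℕ} (z : Fin d → ℤ) : ℝ := ∑ i, (z i : ℝ) ^ 2

/-- inner product -/
def ip {d : ℕ} (z s : Fin d → ℤ) : ℝ := ∑ i, (z i : ℝ) * (s i : ℝ)

/-- smooth cutoff at radius `R` -/
def chi {d : ℕ} (R : ℝ) (z : Fin d → ℤ) : ℝ := (max 0 (1 - qd z / R ^ 2)) ^ 2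

lemma sqpos (y y' : ℝ) :
    |max 0 y' ^ 2 - max 0 y ^ 2 - 2 * max 0 y * (y' - y)| ≤ (y' - y) ^ 2 := by
  rw [abs_le]
  rcases le_total 0 y with h | h <;> rcases le_total 0 y' with h' | h' <;>
    simp only [max_eq_left, max_eq_right, h, h'] <;> constructor <;> nlinarith [sq_nonneg (y - y'), sq_nonneg y, sq_nonneg y', mul_nonneg (sub_nonneg.mpr h) (sub_nonneg.mpr h'), mul_nonneg (sub_nonneg.mpr h) (sub_nonneg.mpr h)]

lemma qd_add {d : ℕ} (z s : Fin d → ℤ) : qd (z + s) = qd z + (2 * ip z s + qd s) := by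
  unfold qd ip
  rw [Finset.mul_sum, ← Finset.sum_add_distrib, ← Finset.sum_add_distrib]
  refine Finset.sum_congr rfl fun i _ => ?_
  push_cast [Pi.add_apply]
  ring

lemma qd_nonneg {d : ℕ} (z : Fin d → ℤ) : 0 ≤ qd z := Finset.sum_nonneg fun i _ => sq_nonneg _

lemma nrm_cast {d : ℕ} (z : Fin d → ℤ) : (nrm z : ℝ) = ∑ i, |(z i : ℝ)| := by
  unfold nrm
  push_cast
  refine Finset.sum_congr rfl fun i _ => ?_
  rw [Nat.cast_natAbs, Int.cast_abs]

lemma abs_ip {d : ℕ} (z s : Fin d → ℤ) : |ip z s| ≤ nrm z * nrm s := by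
  unfold ip
  refine (Finset.abs_sum_le_sum_abs _ _).trans ?_
  rw [nrm_cast s, Finset.mul_sum]
  refine Finset.sum_le_sum fun i _ => ?_
  rw [abs_mul]
  exact mul_le_mul_of_nonneg_right (abs_le_nrm z i) (abs_nonneg _)

lemma qd_le {d : ℕ} (s : Fin d → ℤ) : qd s ≤ nrm s * nrm s := by
  have := abs_ip s s
  refine le_trans (le_of_eq ?_) ((le_abs_self _).trans this)
  unfold qd ip
  exact Finset.sum_congr rfl fun i _ => by ring

/-- step constant -/
def stepc {d : ℕ} (s : Fin d → ℤ) : ℝ := 2 * nrm s + nrm s * nrm s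

lemma stepc_nonneg {d : ℕ} (s : Fin d → ℤ) : 0 ≤ stepc s := by unfold stepc; positivity

lemma inc_le {d : ℕ} (z s : Fin d → ℤ) : |2 * ip z s + qd s| ≤ stepc s * wt z := by
  have h1 := abs_ip z s
  have h2 := qd_le s
  have h3 := qd_nonneg s
  have h4 : (0:ℝ) ≤ nrm s := Nat.cast_nonneg _
  have h5 : (0:ℝ) ≤ nrm z := Nat.cast_nonneg _
  have : |2 * ip z s + qd s| ≤ 2 * |ip z s| + qd s := by
    refine (abs_add_le _ _).trans ?_
    rw [abs_mul, abs_of_nonneg h3]; simp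
  unfold stepc wt
  nlinarith [mul_nonneg h4 h5, mul_nonneg h4 h4, mul_nonneg (mul_nonneg h4 h4) h5]

lemma chi_expand {d : ℕ} (R : ℝ) (hR : 1 ≤ R) (z s : Fin d → ℤ) :
    |chi R (z + s) - chi R z + 2 * max 0 (1 - qd z / R ^ 2) * ((2 * ip z s + qd s) / R ^ 2)|
      ≤ (stepc s * wt z / R ^ 2) ^ 2 := by
  have h := sqpos (1 - qd z / R ^ 2) (1 - qd (z + s) / R ^ 2)
  have e : (1 - qd (z + s) / R ^ 2) - (1 - qd z / R ^ 2) = - ((2 * ip z s + qd s) / R ^ 2) := by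
    rw [qd_add]; ring
  rw [e] at h
  unfold chi
  refine le_trans (le_of_eq (by congr 1; ring)) (h.trans ?_)
  rw [neg_sq, ← sq_abs, abs_div, abs_of_nonneg (by positivity : (0:ℝ) ≤ R ^ 2)]
  have := inc_le z s
  gcongr

lemma max_chi_le {d : ℕ} (R : ℝ) (z : Fin d → ℤ) : max 0 (1 - qd z / R ^ 2) ≤ 1 := by
  have : 0 ≤ qd z / R ^ 2 := div_nonneg (qd_nonneg z) (sq_nonneg _)
  exact max_le zero_le_one (by linarith)

lemma chi_nonneg {d : ℕ} (R : ℝ) (z : Fin d → ℤ) : 0 ≤ chi R z := sq_nonneg _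

lemma chi_le_one {d : ℕ} (R : ℝ) (z : Fin d → ℤ) : chi R z ≤ 1 :=
  pow_le_one₀ (le_max_left _ _) (max_chi_le R z)

lemma chi_zero {d : ℕ} (R : ℝ) (hR : 1 ≤ R) (z : Fin d → ℤ) (h : (d + 2) * R < wt z) :
    chi R z = 0 := by
  have : 1 - qd z / R ^ 2 ≤ 0 := by
    by_contra hc
    push Not at hc
    have h1 : qd z < R ^ 2 := by
      have : qd z / R ^ 2 < 1 := by linarith
      rwa [div_lt_one (by positivity)] at this
    have h2 : ∀ i, |(z i : ℝ)| ≤ R := fun i => by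
      refine abs_le_of_sq_le_sq (le_trans ?_ h1.le) (by linarith)
      exact Finset.single_le_sum (f := fun i => (z i : ℝ) ^ 2) (fun i _ => sq_nonneg _) (Finset.mem_univ i)
    have h3 : (nrm z : ℝ) ≤ d * R := by
      rw [nrm_cast]
      refine (Finset.sum_le_sum fun i _ => h2 i).trans ?_
      simp
    unfold wt at h
    nlinarith
  unfold chi
  rw [max_eq_left this]; ring

lemma chi_tendsto {d : ℕ} (z : Fin d → ℤ) :
    Tendsto (fun n : ℕ => chi ((n : ℝ) + 1) z) atTop (𝓝 1) := by
  have h0 : Tendsto (fun n : ℕ => (n : ℝ) + 1) atTop atTop :=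
    tendsto_atTop_add_const_right _ _ tendsto_natCast_atTop_atTop
  have h1 : Tendsto (fun n : ℕ => qd z / ((n : ℝ) + 1) ^ 2) atTop (𝓝 0) :=
    tendsto_const_nhds.div_atTop ((tendsto_pow_atTop (by norm_num)).comp h0)
  have h2 : Tendsto (fun n : ℕ => (max 0 (1 - qd z / ((n : ℝ) + 1) ^ 2)) ^ 2) atTop
      (𝓝 ((max 0 (1 - 0)) ^ 2)) :=
    (((tendsto_const_nhds (x := (0:ℝ))).max (tendsto_const_nhds.sub h1)).pow 2)
  simpa [chi] using h2

lemma chi_step {d : ℕ} (s : Fin d → ℤ) (Lc : ℝ) (hL : 0 ≤ Lc) :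
    ∃ K, 0 ≤ K ∧ ∀ R : ℝ, 1 ≤ R → ∀ z, wt z ≤ Lc * R → |chi R (z + s) - chi R z| ≤ K * wt z / R ^ 2 := by
  have hs := stepc_nonneg s
  refine ⟨2 * stepc s + stepc s ^ 2 * Lc, by positivity, fun R hR z hz => ?_⟩
  have h := chi_expand R hR z s
  have hw := wt_pos z
  have hR0 : 0 < R := by linarith
  set m := max 0 (1 - qd z / R ^ 2) with hm
  have hm0 : 0 ≤ m := le_max_left _ _
  have hm1 : m ≤ 1 := max_chi_le R z
  have h2 : |2 * m * ((2 * ip z s + qd s) / R ^ 2)| ≤ 2 * (stepc s * wt z / R ^ 2) := by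
    rw [abs_mul, abs_div, abs_of_nonneg (by positivity : 0 ≤ 2 * m), abs_of_nonneg (by positivity : 0 ≤ R ^ 2)]
    have := inc_le z s
    calc 2 * m * (|2 * ip z s + qd s| / R ^ 2) ≤ 2 * 1 * (stepc s * wt z / R ^ 2) := by gcongr
      _ = _ := by ring
  have h3 : (stepc s * wt z / R ^ 2) ^ 2 ≤ stepc s ^ 2 * Lc * wt z / R ^ 2 := by
    rw [div_pow, div_le_div_iff₀ (by positivity) (by positivity)]
    have : wt z * R ^ 2 ≤ Lc * (R ^ 2) ^ 2 := by
      calc wt z * R ^ 2 ≤ Lc * R * R ^ 2 := by gcongr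
        _ = Lc * R ^ 3 := by ring
        _ ≤ Lc * R ^ 4 := by gcongr <;> norm_num
        _ = _ := by ring
    calc (stepc s * wt z) ^ 2 * R ^ 2 = stepc s ^ 2 * wt z * (wt z * R ^ 2) := by ring
      _ ≤ stepc s ^ 2 * wt z * (Lc * (R ^ 2) ^ 2) := by gcongr
      _ = _ := by ring
  have h4 : chi R (z + s) - chi R z = (chi R (z + s) - chi R z + 2 * m * ((2 * ip z s + qd s) / R ^ 2)) - 2 * m * ((2 * ip z s + qd s) / R ^ 2) := by ring
  rw [h4]
  refine (abs_sub _ _).trans ?_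
  calc _ ≤ stepc s ^ 2 * Lc * wt z / R ^ 2 + 2 * (stepc s * wt z / R ^ 2) := add_le_add (h.trans h3) h2
    _ = _ := by ring

lemma chi_op {d : ℕ} {ι : Type} [Fintype ι] (s : ι → Fin d → ℤ) (c : ι → ℝ)
    (m1 : ∀ i, ∑ t, c t * (s t i : ℝ) = 0) (Lc : ℝ) (hL : 0 ≤ Lc) :
    ∃ K, 0 ≤ K ∧ ∀ R : ℝ, 1 ≤ R → ∀ z, wt z ≤ Lc * R →
      |∑ t, c t * (chi R (z + s t) - chi R z)| ≤ K / R ^ 2 := by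
  refine ⟨∑ t, |c t| * (stepc (s t) ^ 2 * Lc ^ 2) + 2 * |∑ t, c t * qd (s t)|,
    by positivity, fun R hR z hz => ?_⟩
  have hw := wt_pos z
  have hR0 : 0 < R := by linarith
  set m := max 0 (1 - qd z / R ^ 2) with hm
  have hm0 : 0 ≤ m := le_max_left _ _
  have hm1 : m ≤ 1 := max_chi_le R z
  have hip : ∑ t, c t * ip z (s t) = 0 := by
    unfold ip
    simp_rw [Finset.mul_sum]
    rw [Finset.sum_comm]
    refine Finset.sum_eq_zero fun i _ => ?_
    have := m1 i
    calc _ = z i * ∑ t, c t * (s t i : ℝ) := by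
          rw [Finset.mul_sum]; exact Finset.sum_congr rfl fun t _ => by ring
      _ = 0 := by rw [this, mul_zero]
  have e : ∑ t, c t * (chi R (z + s t) - chi R z) =
      ∑ t, c t * (chi R (z + s t) - chi R z + 2 * m * ((2 * ip z (s t) + qd (s t)) / R ^ 2))
        - 2 * m / R ^ 2 * ∑ t, c t * qd (s t) := by
    have : 2 * m / R ^ 2 * ∑ t, c t * qd (s t) = 2 * m / R ^ 2 * (∑ t, c t * qd (s t)) + 4 * m / R ^ 2 * ∑ t, c t * ip z (s t) := by
      rw [hip]; ring
    rw [this, Finset.mul_sum, Finset.mul_sum, ← Finset.sum_add_distrib, ← Finset.sum_sub_distrib]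
    exact Finset.sum_congr rfl fun t _ => by ring
  rw [e]
  refine (abs_sub _ _).trans ?_
  rw [add_div, Finset.sum_div]
  refine add_le_add ((Finset.abs_sum_le_sum_abs _ _).trans (Finset.sum_le_sum fun t _ => ?_)) ?_
  · rw [abs_mul, mul_div_assoc]
    refine mul_le_mul_of_nonneg_left ((chi_expand R hR z (s t)).trans ?_) (abs_nonneg _)
    rw [div_pow, div_le_div_iff₀ (by positivity) (by positivity)]
    have hs := stepc_nonneg (s t)
    calc (stepc (s t) * wt z) ^ 2 * R ^ 2 ≤ (stepc (s t) * (Lc * R)) ^ 2 * R ^ 2 := by gcongr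
      _ = _ := by ring
  · rw [abs_mul, abs_of_nonneg (by positivity : 0 ≤ 2 * m / R ^ 2)]
    calc 2 * m / R ^ 2 * |∑ t, c t * qd (s t)| ≤ 2 * 1 / R ^ 2 * |∑ t, c t * qd (s t)| := by gcongr
      _ = _ := by ring

/-- commutator bound -/
lemma comm_bound {d : ℕ} (hd : 1 ≤ d) {ι : Type} [Fintype ι] (s : ι → Fin d → ℤ) (c : ι → ℝ)
    (m1 : ∀ i, ∑ t, c t * (s t i : ℝ) = 0) (g : (Fin d → ℤ) → ℝ)
    (hg0 : ∃ C, ∀ x, |g x| ≤ C * (1 / wt x ^ (d - 1)))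
    (hg1 : ∀ r, ∃ C, ∀ x, |dl r g x| ≤ C * (1 / wt x ^ d)) :
    ∃ Lc K, 1 ≤ Lc ∧ 0 ≤ K ∧ ∀ R : ℝ, 1 ≤ R → ∀ z,
      (¬ wt z ≤ Lc * R → ∑ t, c t * ((chi R z - chi R (z + s t)) * g (z + s t)) = 0) ∧
      (wt z ≤ Lc * R → |∑ t, c t * ((chi R z - chi R (z + s t)) * g (z + s t))|
        ≤ K / R ^ 2 * (1 / wt z ^ (d - 1))) := by
  set Lc : ℝ := (1 + ∑ t, (nrm (s t) : ℝ)) * (d + 2) with hLc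
  have hL1 : 1 ≤ Lc := by
    have : (0:ℝ) ≤ ∑ t, (nrm (s t) : ℝ) := by positivity
    have : (0:ℝ) ≤ d := by positivity
    nlinarith
  obtain ⟨C0, hC0, h0⟩ := nonneg_const (slow_pow _).1 hg0
  choose C1 hC1 h1 using fun t => nonneg_const (slow_pow _).1 (hg1 (s t))
  obtain ⟨K0, hK0, k0⟩ := chi_op s c m1 Lc (by linarith)
  choose K1 hK1 k1 using fun t => chi_step (s t) Lc (by linarith)
  refine ⟨Lc, K0 * C0 + ∑ t, |c t| * (K1 t * C1 t), hL1,
    add_nonneg (by positivity) (Finset.sum_nonneg fun t _ => mul_nonneg (abs_nonneg _) (mul_nonneg (hK1 t) (hC1 t))), fun R hR z => ⟨fun hz => ?_, fun hz => ?_⟩⟩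
  · push Not at hz
    have hz0 : chi R z = 0 := by
      refine chi_zero R hR z (lt_of_le_of_lt ?_ hz)
      refine mul_le_mul_of_nonneg_right ?_ (by linarith)
      have : (0:ℝ) ≤ ∑ t, (nrm (s t) : ℝ) := by positivity
      have : (0:ℝ) ≤ d := by positivity
      nlinarith
    refine Finset.sum_eq_zero fun t _ => ?_
    have hzt : chi R (z + s t) = 0 := by
      refine chi_zero R hR _ ?_
      by_contra hc
      push Not at hc
      have a1 := wt_le_add z (s t)
      have a2 : (nrm (s t) : ℝ) ≤ ∑ t, (nrm (s t) : ℝ) :=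
        Finset.single_le_sum (f := fun t => (nrm (s t) : ℝ)) (fun _ _ => Nat.cast_nonneg _) (Finset.mem_univ t)
      have : wt z ≤ Lc * R := by
        calc wt z ≤ (1 + nrm (s t)) * wt (z + s t) := a1
          _ ≤ (1 + ∑ t, (nrm (s t) : ℝ)) * ((d + 2) * R) := by
            have := wt_pos (z + s t); gcongr
          _ = _ := by rw [hLc]; ring
      linarith
    rw [hz0, hzt]; ring
  · have hw := wt_pos z
    have hR0 : 0 < R := by linarith
    have e : ∑ t, c t * ((chi R z - chi R (z + s t)) * g (z + s t)) =
        -(g z * ∑ t, c t * (chi R (z + s t) - chi R z)) -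
          ∑ t, c t * ((chi R (z + s t) - chi R z) * dl (s t) g z) := by
      rw [Finset.mul_sum, ← Finset.sum_neg_distrib, ← Finset.sum_sub_distrib]
      refine Finset.sum_congr rfl fun t _ => ?_
      simp only [dl]; ring
    rw [e]
    refine (abs_sub _ _).trans ?_
    rw [abs_neg, add_div, add_mul]
    refine add_le_add ?_ ?_
    · rw [abs_mul]
      calc _ ≤ (C0 * (1 / wt z ^ (d - 1))) * (K0 / R ^ 2) :=
            mul_le_mul (h0 z) (k0 R hR z hz) (abs_nonneg _) (by positivity)
        _ = _ := by ring
    · refine (Finset.abs_sum_le_sum_abs _ _).trans ?_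
      rw [Finset.sum_div, Finset.sum_mul]
      refine Finset.sum_le_sum fun t _ => ?_
      rw [abs_mul, abs_mul, mul_div_assoc, mul_assoc]
      refine mul_le_mul_of_nonneg_left ?_ (abs_nonneg _)
      calc _ ≤ (K1 t * wt z / R ^ 2) * (C1 t * (1 / wt z ^ d)) :=
            mul_le_mul (k1 t R hR z hz) (h1 t z) (abs_nonneg _) (by have := hK1 t; positivity)
        _ = _ := by
          obtain ⟨e, rfl⟩ : ∃ e, d = e + 1 := ⟨d - 1, by omega⟩
          simp only [Nat.add_sub_cancel]
          rw [pow_succ]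
          field_simp
          ring

lemma comm_tendsto {d : ℕ} (hd : 1 ≤ d) {ι : Type} [Fintype ι] (s : ι → Fin d → ℤ) (c : ι → ℝ)
    (m1 : ∀ i, ∑ t, c t * (s t i : ℝ) = 0) (g U : (Fin d → ℤ) → ℝ)
    (hg0 : ∃ C, ∀ x, |g x| ≤ C * (1 / wt x ^ (d - 1)))
    (hg1 : ∀ r, ∃ C, ∀ x, |dl r g x| ≤ C * (1 / wt x ^ d))
    (hU : ∀ ε : ℝ, 0 < ε → ∃ B, 0 ≤ B ∧ ∀ z, |U z| ≤ B + ε * wt z) :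
    Tendsto (fun n : ℕ => ∑' z, U z * ∑ t, c t * ((chi ((n:ℝ) + 1) z - chi ((n:ℝ) + 1) (z + s t)) * g (z + s t)))
      atTop (𝓝 0) := by
  obtain ⟨Lc, K, hL, hK, hb⟩ := comm_bound hd s c m1 g hg0 hg1
  have key : ∀ ε : ℝ, 0 < ε → ∃ B, 0 ≤ B ∧ ∀ n : ℕ, |∑' z, U z * ∑ t, c t * ((chi ((n:ℝ) + 1) z - chi ((n:ℝ) + 1) (z + s t)) * g (z + s t))|
      ≤ B / ((n:ℝ) + 1) + ε * (K * (4 * 5 ^ d) * Lc * 2 * Lc) := by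
    intro ε hε
    obtain ⟨B, hB0, hB⟩ := hU ε hε
    refine ⟨K * B * (4 * 5 ^ d * (2 * Lc)), by positivity, fun n => ?_⟩
    set R : ℝ := (n:ℝ) + 1 with hR
    have hR1 : 1 ≤ R := by have : (0:ℝ) ≤ n := Nat.cast_nonneg n; linarith
    have hR0 : 0 < R := by linarith
    refine tsum_ball (Lc * R) _ _ (fun z => 1 / wt z ^ (d - 1) * (K / R ^ 2 * (B + ε * (Lc * R))))
      (fun z hz => by rw [(hb R hR1 z).1 hz, mul_zero]) (fun z hz => ?_) (fun S hS => ?_)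
    · have hw := wt_pos z
      rw [abs_mul]
      calc _ ≤ (B + ε * (Lc * R)) * (K / R ^ 2 * (1 / wt z ^ (d - 1))) := by
            refine mul_le_mul ((hB z).trans (by gcongr)) ((hb R hR1 z).2 hz) (abs_nonneg _) (by positivity)
        _ = _ := by ring
    · rw [← Finset.sum_mul]
      have := sum_S1 hd S (2 * Lc * R) (by nlinarith) (fun z hz => (hS z hz).trans (by nlinarith))
      calc _ ≤ (4 * 5 ^ d) * (2 * Lc * R) * (K / R ^ 2 * (B + ε * (Lc * R))) := by gcongr
        _ = _ := by field_simp
  rw [Metric.tendsto_atTop]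
  intro δ hδ
  set T := K * (4 * 5 ^ d) * Lc * 2 * Lc with hT
  have hT0 : 0 ≤ T := by positivity
  obtain ⟨B, hB0, hB⟩ := key (δ / (2 * (T + 1))) (by positivity)
  obtain ⟨n0, hn0⟩ := exists_nat_gt (B / (δ / 2))
  refine ⟨n0, fun n hn => ?_⟩
  rw [Real.dist_eq, sub_zero]
  refine (hB n).trans_lt ?_
  have h1 : B / ((n:ℝ) + 1) < δ / 2 := by
    rw [div_lt_iff₀ (by positivity)]
    rw [div_lt_iff₀ (by positivity)] at hn0
    have : (n0:ℝ) ≤ n := by exact_mod_cast hn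
    nlinarith
  have h2 : δ / (2 * (T + 1)) * T ≤ δ / 2 := by
    rw [div_mul_eq_mul_div, div_le_div_iff₀ (by positivity) (by positivity)]
    nlinarith
  linarith



lemma tendsto_shift {d : ℕ} (r : Fin d → ℤ) (E : (Fin d → ℤ) → ℝ)
    (h : Tendsto E cofinite (𝓝 0)) : Tendsto (fun z => E (z + r)) cofinite (𝓝 0) :=
  h.comp (Equiv.addRight r).injective.tendsto_cofinite

lemma dirs_tendsto {d : ℕ} (Rz : Set (Fin d → ℤ)) (hR : AddSubgroup.closure Rz = ⊤)
    (E : (Fin d → ℤ) → ℝ) (h : ∀ r ∈ Rz, Tendsto (dl r E) cofinite (𝓝 0)) (r : Fin d → ℤ) :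
    Tendsto (dl r E) cofinite (𝓝 0) := by
  have hr : r ∈ AddSubgroup.closure Rz := by rw [hR]; trivial
  induction hr using AddSubgroup.closure_induction with
  | mem x hx => exact h x hx
  | zero =>
    have : dl (0 : Fin d → ℤ) E = fun _ => 0 := by funext z; simp [dl]
    rw [this]; exact tendsto_const_nhds
  | add x y _ _ hx hy =>
    have : dl (x + y) E = fun z => dl y E (z + x) + dl x E z := by
      funext z; simp only [dl]; rw [show z + (x + y) = z + x + y by abel]; ring
    rw [this]
    simpa using (tendsto_shift x _ hy).add hx
  | neg x _ hx =>
    have : dl (-x) E = fun z => -(dl x E (z + -x)) := by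
      funext z; simp only [dl]; rw [show z + -x + x = z by abel]; ring
    rw [this]
    simpa using (tendsto_shift (-x) _ hx).neg

lemma growth {d : ℕ} (E : (Fin d → ℤ) → ℝ)
    (hE : ∀ i, Tendsto (dl (ev i) E) cofinite (𝓝 0)) (ε : ℝ) (hε : 0 < ε) :
    ∃ B, 0 ≤ B ∧ ∀ z, |E z| ≤ B + ε * wt z := by
  have hfin : (⋃ i : Fin d, {y | ¬ |dl (ev i) E y| ≤ ε}).Finite := by
    refine Set.finite_iUnion fun i => ?_
    have h1 : ∀ᶠ y in cofinite, |dl (ev i) E y| ≤ ε := by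
      have := (hE i).eventually (Metric.closedBall_mem_nhds (0:ℝ) hε)
      filter_upwards [this] with y hy
      simpa [Real.dist_eq] using hy
    exact h1
  set k0 : ℕ := hfin.toFinset.sup nrm + 1 with hk0
  set F := (finite_nrm_le (d := d) k0).toFinset with hF
  refine ⟨∑ z ∈ F, |E z|, Finset.sum_nonneg fun _ _ => abs_nonneg _, fun z => ?_⟩
  have h := path_bound E (nrm z) k0 ε (∑ z ∈ F, |E z|)
    (fun y hy => Finset.single_le_sum (f := fun z => |E z|) (fun _ _ => abs_nonneg _) (by simp [hF, hy])) hε.le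
    (fun i y _ hy => by
      by_contra hc
      have : y ∈ hfin.toFinset := by
        rw [Set.Finite.mem_toFinset]; exact Set.mem_iUnion.mpr ⟨i, hc⟩
      have := Finset.le_sup (f := nrm) this
      omega) (nrm z) le_rfl z rfl
  refine h.trans ?_
  unfold wt
  nlinarith

lemma fs_summable {d : ℕ} (X : ℝ) (P V : (Fin d → ℤ) → ℝ) (hP : ∀ k, ¬ wt k ≤ X → P k = 0)
    (r : Fin d → ℤ) : Summable (fun z => V z * P (z + r)) := by
  rw [← (Equiv.addRight (-r)).summable_iff]
  refine summable_ball X _ fun k hk => ?_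
  simp [hP k hk]

lemma fs_shift {d : ℕ} (P V : (Fin d → ℤ) → ℝ) (r : Fin d → ℤ) :
    ∑' z, V z * P (z + -r) = ∑' z, P z * V (z + r) := by
  rw [← (Equiv.addRight r).tsum_eq]
  refine tsum_congr fun z => ?_
  simp [mul_comm]

lemma dual {d : ℕ} {ι : Type} [Fintype ι] (s : ι → Fin d → ℤ) (c c' : ι → ℝ)
    (sym : ∀ θ : (Fin d → ℤ) → ℝ, ∑ t, c' t * θ (-(s t)) = ∑ t, c t * θ (s t))
    (X : ℝ) (P V : (Fin d → ℤ) → ℝ) (hP : ∀ k, ¬ wt k ≤ X → P k = 0) :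
    ∑' z, V z * ∑ t, c t * P (z + s t) = ∑' m, P m * ∑ t, c' t * V (m + s t) := by
  calc ∑' z, V z * ∑ t, c t * P (z + s t) = ∑' z, ∑ t, c' t * (V z * P (z + -(s t))) := by
        refine tsum_congr fun z => ?_
        rw [← sym (fun x => P (z + x)), Finset.mul_sum]
        exact Finset.sum_congr rfl fun t _ => by ring
    _ = ∑ t, ∑' z, c' t * (V z * P (z + -(s t))) :=
        Summable.tsum_finsetSum fun t _ => (fs_summable X P V hP _).mul_left _
    _ = ∑ t, ∑' m, c' t * (P m * V (m + s t)) := by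
        refine Finset.sum_congr rfl fun t _ => ?_
        rw [tsum_mul_left, tsum_mul_left, fs_shift]
    _ = ∑' m, ∑ t, c' t * (P m * V (m + s t)) := by
        rw [Summable.tsum_finsetSum]
        intro t _
        refine Summable.mul_left _ (summable_ball X _ fun k hk => ?_)
        rw [hP k hk, zero_mul]
    _ = _ := by
        refine tsum_congr fun z => ?_
        rw [Finset.mul_sum]
        exact Finset.sum_congr rfl fun t _ => by ring

lemma green_rep {d N : ℕ} (hd : 2 ≤ d) {ι : Type} [Fintype ι] (s : ι → Fin d → ℤ)
    (M : ι → Fin N → Fin N → ℝ) (Gm : Fin N → Fin N → (Fin d → ℤ) → ℝ)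
    (U f : Fin N → (Fin d → ℤ) → ℝ)
    (m1 : ∀ a b i, ∑ t, M t a b * (s t i : ℝ) = 0)
    (sym : ∀ a b (θ : (Fin d → ℤ) → ℝ), ∑ t, M t b a * θ (-(s t)) = ∑ t, M t a b * θ (s t))
    (hG : ∀ k a z, ∑ b, ∑ t, M t a b * Gm b k (z + s t) = if z = 0 ∧ a = k then 1 else 0)
    (hGd : ∀ b k (S : Multiset (Fin d → ℤ)), S ≠ 0 →
      ∃ C, ∀ x, |dm S (Gm b k) x| ≤ C * (1 / wt x ^ (d + Multiset.card S - 2)))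
    (hf : ∀ a z, f a z = ∑ b, ∑ t, M t a b * U b (z + s t))
    (hfs : ∀ a, Summable (f a))
    (hU : ∀ a, ∀ ε : ℝ, 0 < ε → ∃ B, 0 ≤ B ∧ ∀ z, |U a z| ≤ B + ε * wt z)
    (k : Fin N) (ρ l : Fin d → ℤ) :
    dl ρ (U k) l = ∑ b, ∑' m, (Gm b k (m - (l + ρ)) - Gm b k (m - l)) * f b m := by
  set g : Fin N → (Fin d → ℤ) → ℝ := fun b m => Gm b k (m - (l + ρ)) - Gm b k (m - l) with hgdef
  have hge : ∀ b m, g b m = dm {-ρ} (Gm b k) (m + -l) := fun b m => by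
    rw [← Multiset.cons_zero, dm_cons, dm_zero]
    simp only [hgdef, dl]
    congr 2; abel
  have hg0 : ∀ b, ∃ C, ∀ x, |g b x| ≤ C * (1 / wt x ^ (d - 1)) := fun b => by
    obtain ⟨C, hC0, hC⟩ := nonneg_const (slow_pow _).1 (hGd b k {-ρ} (by simp))
    obtain ⟨C', hC0', hC'⟩ := (slow_pow (d := d) (d - 1)).2 (-l)
    refine ⟨C * C', fun x => ?_⟩
    rw [hge]
    refine (hC _).trans ?_
    rw [mul_assoc, Multiset.card_singleton, show d + 1 - 2 = d - 1 by omega]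
    exact mul_le_mul_of_nonneg_left (hC' x) hC0
  have hg1 : ∀ b r, ∃ C, ∀ x, |dl r (g b) x| ≤ C * (1 / wt x ^ d) := fun b r => by
    obtain ⟨C, hC0, hC⟩ := nonneg_const (slow_pow _).1 (hGd b k (r ::ₘ {-ρ}) (by simp))
    obtain ⟨C', hC0', hC'⟩ := (slow_pow (d := d) d).2 (-l)
    refine ⟨C * C', fun x => ?_⟩
    have e : dl r (g b) x = dm (r ::ₘ {-ρ}) (Gm b k) (x + -l) := by
      rw [dm_cons]
      simp only [dl, hge]
      rw [show x + r + -l = x + -l + r by abel]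
    rw [e]
    refine (hC _).trans ?_
    rw [mul_assoc, Multiset.card_cons, Multiset.card_singleton, show d + (1 + 1) - 2 = d by omega]
    exact mul_le_mul_of_nonneg_left (hC' x) hC0
  have hgb : ∀ b, ∃ C, ∀ x, |g b x| ≤ C := fun b => by
    obtain ⟨C, hC0, hC⟩ := nonneg_const (slow_pow _).1 (hg0 b)
    refine ⟨C, fun x => (hC x).trans ?_⟩
    have := two_le_wt x
    have h1 : 1 / wt x ^ (d - 1) ≤ 1 := by
      rw [div_le_one (by positivity)]
      exact one_le_pow₀ (by linarith)
    nlinarith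
  have hHg : ∀ a z, ∑ b, ∑ t, M t a b * g b (z + s t) =
      (if a = k then (if z = l + ρ then 1 else 0) else 0) - (if a = k then (if z = l then 1 else 0) else 0) := by
    intro a z
    have h1 := hG k a (z - (l + ρ))
    have h2 := hG k a (z - l)
    have : ∑ b, ∑ t, M t a b * g b (z + s t) =
        ∑ b, ∑ t, M t a b * Gm b k (z - (l + ρ) + s t) - ∑ b, ∑ t, M t a b * Gm b k (z - l + s t) := by
      rw [← Finset.sum_sub_distrib]
      refine Finset.sum_congr rfl fun b _ => ?_
      rw [← Finset.sum_sub_distrib]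
      refine Finset.sum_congr rfl fun t _ => ?_
      simp only [hgdef]
      rw [show z + s t - (l + ρ) = z - (l + ρ) + s t by abel, show z + s t - l = z - l + s t by abel]
      ring
    rw [this, h1, h2]
    simp only [sub_eq_zero]
    by_cases ha : a = k <;> simp [ha]
  -- the cut-off identity
  have hid : ∀ n : ℕ, ∑ a, ∑ b, ∑' z, U a z * ∑ t, M t a b *
        ((chi ((n:ℝ) + 1) z - chi ((n:ℝ) + 1) (z + s t)) * g b (z + s t)) =
      (chi ((n:ℝ) + 1) (l + ρ) * U k (l + ρ) - chi ((n:ℝ) + 1) l * U k l)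
        - ∑ b, ∑' m, chi ((n:ℝ) + 1) m * g b m * f b m := by
    intro n
    set R : ℝ := (n:ℝ) + 1 with hRdef
    have hR : 1 ≤ R := by have : (0:ℝ) ≤ n := Nat.cast_nonneg n; linarith
    have hsupp : ∀ z : Fin d → ℤ, ¬ wt z ≤ (d + 2) * R → chi R z = 0 := fun z hz =>
      chi_zero R hR z (not_le.mp hz)
    have s1 : ∀ a b, Summable fun z => chi R z * (U a z * ∑ t, M t a b * g b (z + s t)) := fun a b =>
      summable_ball ((d + 2) * R) _ fun z hz => by rw [hsupp z hz, zero_mul]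
    have s2 : ∀ a b, Summable fun z => U a z * ∑ t, M t a b * (chi R (z + s t) * g b (z + s t)) := fun a b => by
      have : (fun z => U a z * ∑ t, M t a b * (chi R (z + s t) * g b (z + s t))) =
          fun z => ∑ t, M t a b * (U a z * (chi R (z + s t) * g b (z + s t))) := by
        funext z; rw [Finset.mul_sum]; exact Finset.sum_congr rfl fun t _ => by ring
      rw [this]
      refine summable_sum fun t _ => Summable.mul_left _ ?_
      exact fs_summable ((d + 2) * R) (fun z => chi R z * g b z) (U a) (fun z hz => by rw [hsupp z hz, zero_mul]) (s t)
    have e1 : ∀ a b, ∑' z, U a z * ∑ t, M t a b * ((chi R z - chi R (z + s t)) * g b (z + s t)) =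
        ∑' z, chi R z * (U a z * ∑ t, M t a b * g b (z + s t)) -
          ∑' m, chi R m * g b m * ∑ t, M t b a * U a (m + s t) := by
      intro a b
      rw [← dual s (fun t => M t a b) (fun t => M t b a) (sym a b) ((d + 2) * R) (fun z => chi R z * g b z) (U a)
        (fun z hz => by rw [hsupp z hz, zero_mul]), ← (s1 a b).tsum_sub (s2 a b)]
      refine tsum_congr fun z => ?_
      simp only [Finset.mul_sum]
      rw [← Finset.sum_sub_distrib]
      exact Finset.sum_congr rfl fun t _ => by ring
    simp only [e1, Finset.sum_sub_distrib]
    congr 1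
    · have e2 : ∀ a, ∑ b, ∑' z, chi R z * (U a z * ∑ t, M t a b * g b (z + s t)) =
          ∑' z, chi R z * (U a z * ∑ b, ∑ t, M t a b * g b (z + s t)) := fun a => by
        rw [← Summable.tsum_finsetSum fun b _ => s1 a b]
        refine tsum_congr fun z => ?_
        simp only [Finset.mul_sum]
      simp only [e2, hHg]
      rw [Finset.sum_eq_single k]
      · simp only [if_true, mul_sub]
        have q : ∀ y : Fin d → ℤ, HasSum (fun z => chi R z * (U k z * (if z = y then 1 else 0))) (chi R y * U k y) := fun y => by
          have := hasSum_single (f := fun z => chi R z * (U k z * (if z = y then 1 else 0))) y (fun z hz => by simp [hz])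
          simpa using this
        exact ((q (l + ρ)).sub (q l)).tsum_eq
      · intro a _ ha; simp [ha]
      · intro h; exact absurd (Finset.mem_univ k) h
    · rw [Finset.sum_comm]
      refine Finset.sum_congr rfl fun b _ => ?_
      rw [← Summable.tsum_finsetSum fun a _ => summable_ball ((d + 2) * R) _ fun z hz => by rw [hsupp z hz]; ring]
      refine tsum_congr fun z => ?_
      rw [hf, Finset.mul_sum]
  -- limits
  have t1 : Tendsto (fun n : ℕ => ∑ a, ∑ b, ∑' z, U a z * ∑ t, M t a b *
        ((chi ((n:ℝ) + 1) z - chi ((n:ℝ) + 1) (z + s t)) * g b (z + s t))) atTop (𝓝 0) := by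
    have : Tendsto (fun n : ℕ => ∑ a, ∑ b, ∑' z, U a z * ∑ t, M t a b *
        ((chi ((n:ℝ) + 1) z - chi ((n:ℝ) + 1) (z + s t)) * g b (z + s t))) atTop
        (𝓝 (∑ a : Fin N, ∑ b : Fin N, (0:ℝ))) :=
      tendsto_finsetSum _ fun a _ => tendsto_finsetSum _ fun b _ =>
        comm_tendsto (by omega) s (fun t => M t a b) (m1 a b) (g b) (U a) (hg0 b) (hg1 b) (hU a)
    simpa using this
  have t2 : Tendsto (fun n : ℕ => ∑ b, ∑' m, chi ((n:ℝ) + 1) m * g b m * f b m) atTop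
      (𝓝 (∑ b, ∑' m, g b m * f b m)) := by
    refine tendsto_finsetSum _ fun b _ => ?_
    obtain ⟨Cg, hCg⟩ := hgb b
    refine tendsto_tsum_of_dominated_convergence (bound := fun m => Cg * |f b m|) ((hfs b).abs.mul_left _)
      (fun m => ?_) (Eventually.of_forall fun n m => ?_)
    · have := (chi_tendsto m).mul_const (g b m * f b m)
      simpa [mul_assoc] using this
    · rw [Real.norm_eq_abs, abs_mul, abs_mul, abs_of_nonneg (chi_nonneg _ _)]
      refine mul_le_mul_of_nonneg_right ?_ (abs_nonneg _)
      calc _ ≤ 1 * Cg := mul_le_mul (chi_le_one _ _) (hCg m) (abs_nonneg _) zero_le_one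
        _ = Cg := one_mul _
  have t3 := (((chi_tendsto (l + ρ)).mul_const (U k (l + ρ))).sub ((chi_tendsto l).mul_const (U k l))).sub t2
  have t4 := tendsto_nhds_unique t1 (by simpa only [hid] using t3)
  simp only [dl]
  linarith



lemma pow_wt_bdd {d : ℕ} (n : ℕ) {F : (Fin d → ℤ) → ℝ} (h : ∃ C, ∀ x, |F x| ≤ C * (1 / wt x ^ n)) :
    ∃ C, ∀ x, |F x| ≤ C := by
  obtain ⟨C, hC0, hC⟩ := nonneg_const (slow_pow _).1 h
  refine ⟨C, fun x => (hC x).trans ?_⟩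
  have := two_le_wt x
  have h1 : 1 / wt x ^ n ≤ 1 := by
    rw [div_le_one (by positivity)]
    exact one_le_pow₀ (by linarith)
  nlinarith

lemma conv_summable {d : ℕ} (g f : (Fin d → ℤ) → ℝ) (hg : ∃ C, ∀ x, |g x| ≤ C) (hf : Summable f)
    (l : Fin d → ℤ) : Summable fun m => g (l - m) * f m := by
  obtain ⟨C, hC⟩ := hg
  refine Summable.of_norm_bounded (hf.abs.mul_left C) fun m => ?_
  rw [Real.norm_eq_abs, abs_mul]
  exact mul_le_mul_of_nonneg_right (hC _) (abs_nonneg _)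

lemma abs_main {d N : ℕ} (hd : 2 ≤ d) {ι : Type} [Fintype ι] (s : ι → Fin d → ℤ)
    (M : ι → Fin N → Fin N → ℝ) (Gm : Fin N → Fin N → (Fin d → ℤ) → ℝ)
    (U f : Fin N → (Fin d → ℤ) → ℝ)
    (m1 : ∀ a b i, ∑ t, M t a b * (s t i : ℝ) = 0)
    (sym : ∀ a b (θ : (Fin d → ℤ) → ℝ), ∑ t, M t b a * θ (-(s t)) = ∑ t, M t a b * θ (s t))
    (hG : ∀ k a z, ∑ b, ∑ t, M t a b * Gm b k (z + s t) = if z = 0 ∧ a = k then 1 else 0)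
    (hGd : ∀ b k (S : Multiset (Fin d → ℤ)), S ≠ 0 →
      ∃ C, ∀ x, |dm S (Gm b k) x| ≤ C * (1 / wt x ^ (d + Multiset.card S - 2)))
    (hf : ∀ a z, f a z = ∑ b, ∑ t, M t a b * U b (z + s t))
    (hU : ∀ a, ∀ ε : ℝ, 0 < ε → ∃ B, 0 ≤ B ∧ ∀ z, |U a z| ≤ B + ε * wt z)
    (p j : ℕ) (hj : 1 ≤ j)
    (hfw : ∀ a, Summable fun m => wt m ^ p * |f a m|)
    (hmom : ∀ a (β : Fin d → ℕ), ∑ i, β i < p → HasSum (fun m => f a m * chp β m) 0)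
    (hfd : ∀ a (S : Multiset (Fin d → ℤ)), Multiset.card S ≤ j - 2 →
      ∃ C, ∀ x, |dm S (f a) x| ≤ C * (1 / (wt x ^ (d + p + Multiset.card S) * Real.log (wt x))))
    (k : Fin N) (rs : Multiset (Fin d → ℤ)) (hrs : Multiset.card rs = j) :
    ∃ C, ∀ l, |dm rs (U k) l| ≤ C * (1 / wt l ^ (d + p + j - 2)) := by
  have hfs : ∀ a, Summable (f a) := fun a => by
    refine Summable.of_norm_bounded (hfw a) fun m => ?_
    have := two_le_wt m
    have h1 : 1 ≤ wt m ^ p := one_le_pow₀ (by linarith)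
    rw [Real.norm_eq_abs]
    exact le_mul_of_one_le_left (abs_nonneg _) h1
  set K : Fin N → Fin N → (Fin d → ℤ) → ℝ := fun k b x => Gm b k (0 - x) with hK
  have hKd : ∀ k b (S : Multiset (Fin d → ℤ)), S ≠ 0 →
      ∃ C, ∀ x, |dm S (K k b) x| ≤ C * (1 / wt x ^ (d + Multiset.card S - 2)) := by
    intro k b S hS
    obtain ⟨C, hC⟩ := hGd b k (S.map fun r => -r) (by simpa using hS)
    refine ⟨C, fun x => ?_⟩
    rw [hK]
    simp only
    rw [dm_reflect]
    have := hC (0 - x)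
    rwa [zero_sub, wt_neg, Multiset.card_map, ← zero_sub] at this
  have rep : ∀ (S : Multiset (Fin d → ℤ)) ρ l, dm (ρ ::ₘ S) (U k) l =
      ∑ b, ∑' m, dm (ρ ::ₘ S) (K k b) (l - m) * f b m := by
    intro S
    induction S using Multiset.induction_on with
    | empty =>
      intro ρ l
      simp only [dm_cons, dm_zero]
      rw [green_rep hd s M Gm U f m1 sym hG hGd hf hfs hU k ρ l]
      refine Finset.sum_congr rfl fun b _ => tsum_congr fun m => ?_
      simp only [dl, hK]
      rw [show 0 - (l - m + ρ) = m - (l + ρ) by abel, show 0 - (l - m) = m - l by abel]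
    | cons r S ih =>
      intro ρ l
      rw [Multiset.cons_swap]
      rw [dm_cons]
      simp only [dl]
      rw [ih, ih, ← Finset.sum_sub_distrib]
      refine Finset.sum_congr rfl fun b _ => ?_
      have hb := pow_wt_bdd _ (hKd k b (ρ ::ₘ S) (by simp))
      rw [← (conv_summable _ _ hb (hfs b) (l + r)).tsum_sub (conv_summable _ _ hb (hfs b) l)]
      refine tsum_congr fun m => ?_
      rw [dm_cons r]
      simp only [dl]
      rw [show l + r - m = l - m + r by abel]; ring
  have hne : rs ≠ 0 := by rintro rfl; simp at hrs; omega
  have rep' : ∀ l, dm rs (U k) l = ∑ b, ∑' m, dm rs (K k b) (l - m) * f b m := by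
    obtain ⟨ρ, hρ⟩ := Multiset.exists_mem_of_ne_zero hne
    obtain ⟨S, rfl⟩ := Multiset.exists_cons_of_mem hρ
    exact rep S ρ
  have each : ∀ b, ∃ C, ∀ l, |∑' m, dm rs (K k b) (l - m) * f b m| ≤ C * (1 / wt l ^ (d + p + j - 2)) := by
    intro b
    obtain ⟨C1, h1⟩ := far_sum (d + j - 2) p (dm rs (K k b)) (fun S => by
      obtain ⟨C, hC⟩ := hKd k b (S + rs) (by simp [hne])
      refine ⟨C, fun x => ?_⟩
      rw [← dm_add, show d + j - 2 + Multiset.card S = d + Multiset.card (S + rs) - 2 by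
        rw [Multiset.card_add]; omega]
      exact hC x) (f b) (hfw b) (hmom b)
    have hnear : ∃ C, ∀ l, |∑' x, eta l x * dm rs (K k b) x * f b (l - x)| ≤ C * (1 / wt l ^ (d + p + j - 2)) := by
      rcases Nat.lt_or_ge j 2 with h | h
      · have hj1 : j = 1 := by omega
        subst hj1
        rw [show d + p + 1 - 2 = d - 1 + p by omega]
        refine near_one (by omega) p _ _ ?_ ?_
        · have := hKd k b rs hne
          rwa [hrs, show d + 1 - 2 = d - 1 by omega] at this
        · refine log_drop (d + p) (f b) ?_
          have := hfd b 0 (by simp)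
          simpa [dm_zero] using this
      · obtain ⟨r1, S1, rfl⟩ : ∃ r S, rs = r ::ₘ S := by
          obtain ⟨ρ, hρ⟩ := Multiset.exists_mem_of_ne_zero hne
          obtain ⟨S, h⟩ := Multiset.exists_cons_of_mem hρ
          exact ⟨ρ, S, h⟩
        rw [Multiset.card_cons] at hrs
        have hne1 : S1 ≠ 0 := by rintro rfl; simp at hrs; omega
        obtain ⟨r2, S, rfl⟩ : ∃ r S, S1 = r ::ₘ S := by
          obtain ⟨ρ, hρ⟩ := Multiset.exists_mem_of_ne_zero hne1
          obtain ⟨S, h⟩ := Multiset.exists_cons_of_mem hρ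
          exact ⟨ρ, S, h⟩
        rw [Multiset.card_cons] at hrs
        have hS : Multiset.card S = j - 2 := by omega
        have e : dm (r1 ::ₘ r2 ::ₘ S) (K k b) = dm S (dm (r1 ::ₘ r2 ::ₘ 0) (K k b)) := by
          rw [← dm_add, Multiset.add_cons, Multiset.add_cons, add_zero]
        rw [e, show d + p + j - 2 = d + p + (j - 2) by omega]
        refine near_ind (j - 2) p (dm (r1 ::ₘ r2 ::ₘ 0) (K k b)) (f b) (fun T => ?_) (fun T hT => hfd b T hT) S hS
        obtain ⟨C, hC⟩ := hKd k b (T + (r1 ::ₘ r2 ::ₘ 0)) (by simp)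
        refine ⟨C, fun x => ?_⟩
        rw [← dm_add, show d + Multiset.card T = d + Multiset.card (T + (r1 ::ₘ r2 ::ₘ 0)) - 2 by
          rw [Multiset.card_add, Multiset.card_cons, Multiset.card_cons, Multiset.card_zero]; omega]
        exact hC x
    obtain ⟨C2, h2⟩ := hnear
    refine ⟨C1 + C2, fun l => ?_⟩
    have e : ∑' m, eta l (l - m) * dm rs (K k b) (l - m) * f b m =
        ∑' x, eta l x * dm rs (K k b) x * f b (l - x) := by
      rw [← (Equiv.subLeft l).tsum_eq]
      refine tsum_congr fun m => ?_
      simp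
    have h3 := h1 l
    rw [e, show d + j - 2 + p = d + p + j - 2 by omega] at h3
    have h4 := h2 l
    rw [add_mul]
    calc _ = |(∑' m, dm rs (K k b) (l - m) * f b m - ∑' x, eta l x * dm rs (K k b) x * f b (l - x)) + ∑' x, eta l x * dm rs (K k b) x * f b (l - x)| := by congr 1; ring
      _ ≤ _ := (abs_add_le _ _).trans (add_le_add h3 h4)
  choose C hC using each
  refine ⟨∑ b, C b, fun l => ?_⟩
  rw [rep', Finset.sum_mul]
  exact (Finset.abs_sum_le_sum_abs _ _).trans (Finset.sum_le_sum fun b _ => hC b l)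



lemma sqrt_le_sum {ι : Type*} (T : Finset ι) (x : ι → ℝ) (hx : ∀ i ∈ T, 0 ≤ x i) :
    Real.sqrt (∑ i ∈ T, x i ^ 2) ≤ ∑ i ∈ T, x i := by
  rw [Real.sqrt_le_left (Finset.sum_nonneg hx)]
  exact Finset.sum_sq_le_sq_sum_of_nonneg hx

lemma le_sqrt_sum {ι : Type*} (T : Finset ι) (x : ι → ℝ) (i : ι) (hi : i ∈ T) :
    |x i| ≤ Real.sqrt (∑ i ∈ T, x i ^ 2) := by
  refine Real.abs_le_sqrt ?_
  exact Finset.single_le_sum (f := fun i => x i ^ 2) (fun i _ => sq_nonneg _) hi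

lemma enorm_nonneg' {n : ℕ} (v : Vec n) : 0 ≤ enorm v := Real.sqrt_nonneg _

lemma enorm_le_sum {n : ℕ} (v : Vec n) : enorm v ≤ ∑ i, |v i| := by
  have := sqrt_le_sum Finset.univ (fun i => |v i|) (fun _ _ => abs_nonneg _)
  simpa [enorm] using this

lemma le_enorm {n : ℕ} (v : Vec n) (i : Fin n) : |v i| ≤ enorm v :=
  le_sqrt_sum Finset.univ v i (Finset.mem_univ i)

lemma lp_add {d : ℕ} (A : Matrix (Fin d) (Fin d) ℝ) (z w : Fin d → ℤ) :
    latticePt d A (z + w) = latticePt d A z + latticePt d A w := by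
  funext i
  simp only [latticePt, Pi.add_apply, Int.cast_add, mul_add, Finset.sum_add_distrib]

/-- additive hom version -/
def lpHom {d : ℕ} (A : Matrix (Fin d) (Fin d) ℝ) : (Fin d → ℤ) →+ Vec d :=
  AddMonoidHom.mk' (latticePt d A) (lp_add A)

lemma lpHom_apply {d : ℕ} (A : Matrix (Fin d) (Fin d) ℝ) (z : Fin d → ℤ) :
    lpHom A z = latticePt d A z := rfl

lemma lp_zero {d : ℕ} (A : Matrix (Fin d) (Fin d) ℝ) : latticePt d A 0 = 0 := (lpHom A).map_zero

lemma lp_sub {d : ℕ} (A : Matrix (Fin d) (Fin d) ℝ) (z w : Fin d → ℤ) :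
    latticePt d A (z - w) = latticePt d A z - latticePt d A w := (lpHom A).map_sub z w

lemma lp_sum {d : ℕ} (A : Matrix (Fin d) (Fin d) ℝ) {ι : Type*} (T : Finset ι) (w : ι → Fin d → ℤ) :
    latticePt d A (∑ i ∈ T, w i) = ∑ i ∈ T, latticePt d A (w i) := map_sum (lpHom A) w T

lemma lp_zsmul {d : ℕ} (A : Matrix (Fin d) (Fin d) ℝ) (n : ℤ) (w : Fin d → ℤ) :
    latticePt d A (n • w) = (n : ℝ) • latticePt d A w := by
  rw [← lpHom_apply, map_zsmul, lpHom_apply]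
  funext i
  simp

lemma lp_inv {d : ℕ} (A : Matrix (Fin d) (Fin d) ℝ) (hA : IsUnit A.det) (z : Fin d → ℤ) (i : Fin d) :
    (z i : ℝ) = ∑ k, A⁻¹ i k * latticePt d A z k := by
  have h : A⁻¹.mulVec (A.mulVec fun j => (z j : ℝ)) = fun j => (z j : ℝ) := by
    rw [Matrix.mulVec_mulVec, Matrix.nonsing_inv_mul A hA, Matrix.one_mulVec]
  have := congrFun h i
  rw [← this]
  rfl

lemma lp_inj {d : ℕ} (A : Matrix (Fin d) (Fin d) ℝ) (hA : IsUnit A.det) :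
    Function.Injective (latticePt d A) := by
  intro z w h
  funext i
  have h1 := lp_inv A hA z i
  have h2 := lp_inv A hA w i
  rw [h, ← h2] at h1
  exact_mod_cast h1

lemma two_le_ang {n : ℕ} (v : Vec n) : 2 ≤ ang v := by
  unfold ang; linarith [enorm_nonneg' v]

lemma ang_le {d : ℕ} (A : Matrix (Fin d) (Fin d) ℝ) :
    ∃ C, 1 ≤ C ∧ ∀ z, ang (latticePt d A z) ≤ C * wt z := by
  set S : ℝ := ∑ i, ∑ j, |A i j| with hS
  have hS0 : 0 ≤ S := by positivity
  refine ⟨S + 1, by linarith, fun z => ?_⟩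
  have h1 : enorm (latticePt d A z) ≤ S * nrm z := by
    refine (enorm_le_sum _).trans ?_
    rw [hS, Finset.sum_mul]
    refine Finset.sum_le_sum fun i _ => ?_
    rw [Finset.sum_mul]
    refine (Finset.abs_sum_le_sum_abs _ _).trans (Finset.sum_le_sum fun j _ => ?_)
    rw [abs_mul]
    exact mul_le_mul_of_nonneg_left (abs_le_nrm z j) (abs_nonneg _)
  have h2 : (0:ℝ) ≤ nrm z := Nat.cast_nonneg _
  unfold ang wt
  nlinarith

lemma le_ang {d : ℕ} (A : Matrix (Fin d) (Fin d) ℝ) (hA : IsUnit A.det) :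
    ∃ C, 1 ≤ C ∧ ∀ z, wt z ≤ C * ang (latticePt d A z) := by
  set S : ℝ := ∑ i, ∑ j, |A⁻¹ i j| with hS
  have hS0 : 0 ≤ S := by positivity
  refine ⟨S + 1, by linarith, fun z => ?_⟩
  have h0 := enorm_nonneg' (latticePt d A z)
  have h1 : (nrm z : ℝ) ≤ S * enorm (latticePt d A z) := by
    rw [nrm_cast, hS, Finset.sum_mul]
    refine Finset.sum_le_sum fun i _ => ?_
    rw [lp_inv A hA, Finset.sum_mul]
    refine (Finset.abs_sum_le_sum_abs _ _).trans (Finset.sum_le_sum fun j _ => ?_)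
    rw [abs_mul]
    exact mul_le_mul_of_nonneg_left (le_enorm _ j) (abs_nonneg _)
  unfold ang wt
  nlinarith

lemma ang_pow {d : ℕ} (A : Matrix (Fin d) (Fin d) ℝ) (hA : IsUnit A.det) (n : ℕ) (e : ℝ) (he : e = -(n:ℝ)) :
    ∃ C, 0 ≤ C ∧ ∀ z, ang (latticePt d A z) ^ e ≤ C * (1 / wt z ^ n) := by
  obtain ⟨C, hC1, hC⟩ := le_ang A hA
  refine ⟨C ^ n, by positivity, fun z => ?_⟩
  have h0 := two_le_ang (latticePt d A z)
  have hw := wt_pos z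
  rw [he, Real.rpow_neg (by linarith), Real.rpow_natCast, mul_one_div, ← div_pow, ← inv_pow]
  refine pow_le_pow_left₀ (by positivity) ?_ n
  rw [inv_eq_one_div, div_le_div_iff₀ (by linarith) hw]
  linarith [hC z]

lemma pow_ang {d : ℕ} (A : Matrix (Fin d) (Fin d) ℝ) (n : ℕ) (e : ℝ) (he : e = -(n:ℝ)) :
    ∃ C, 0 ≤ C ∧ ∀ z, 1 / wt z ^ n ≤ C * ang (latticePt d A z) ^ e := by
  obtain ⟨C, hC1, hC⟩ := ang_le A
  refine ⟨C ^ n, by positivity, fun z => ?_⟩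
  have h0 := two_le_ang (latticePt d A z)
  have hw := wt_pos z
  rw [he, Real.rpow_neg (by linarith), Real.rpow_natCast, ← inv_pow, ← mul_pow, one_div, ← inv_pow]
  refine pow_le_pow_left₀ (by positivity) ?_ n
  rw [inv_eq_one_div, ← div_eq_mul_inv, div_le_div_iff₀ hw (by linarith)]
  linarith [hC z]

lemma log_ang {d : ℕ} (A : Matrix (Fin d) (Fin d) ℝ) (hA : IsUnit A.det) (α : ℝ) (hα : α < -1) :
    ∃ C, 0 ≤ C ∧ ∀ z, Real.log (ang (latticePt d A z)) ^ α ≤ C * Real.log (wt z) ^ α := by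
  obtain ⟨C, hC1, hC⟩ := le_ang A hA
  have hl2 : 0 < Real.log 2 := Real.log_pos (by norm_num)
  have hlC : 0 ≤ Real.log C := Real.log_nonneg hC1
  set K := Real.log C / Real.log 2 + 1 with hK
  have hK0 : 0 < K := by positivity
  refine ⟨(K⁻¹) ^ α, by positivity, fun z => ?_⟩
  have h0 := two_le_ang (latticePt d A z)
  have hla : Real.log 2 ≤ Real.log (ang (latticePt d A z)) := Real.log_le_log (by norm_num) h0
  have hlw := log_wt_pos z
  have h1 : Real.log (wt z) ≤ K * Real.log (ang (latticePt d A z)) := by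
    have := Real.log_le_log (wt_pos z) (hC z)
    rw [Real.log_mul (by linarith) (by linarith)] at this
    rw [hK, add_mul, one_mul]
    have h2 : Real.log C ≤ Real.log C / Real.log 2 * Real.log (ang (latticePt d A z)) := by
      rw [div_mul_eq_mul_div, le_div_iff₀ hl2]
      exact mul_le_mul_of_nonneg_left hla hlC
    linarith
  rw [← Real.mul_rpow (by positivity) hlw.le]
  refine Real.rpow_le_rpow_of_nonpos (by positivity) ?_ (by linarith)
  rw [inv_mul_le_iff₀ hK0]
  exact h1

lemma log_wt_alpha {d : ℕ} (α : ℝ) (hα : α < -1) :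
    ∃ C, 0 ≤ C ∧ ∀ z : Fin d → ℤ, Real.log (wt z) ^ α ≤ C * (1 / Real.log (wt z)) := by
  have hl2 : 0 < Real.log 2 := Real.log_pos (by norm_num)
  refine ⟨Real.log 2 ^ (α + 1), by positivity, fun z => ?_⟩
  have hlw := log_wt_pos z
  have h1 : Real.log 2 ≤ Real.log (wt z) := Real.log_le_log (by norm_num) (two_le_wt z)
  rw [mul_one_div, le_div_iff₀ hlw]
  have : Real.log (wt z) ^ α * Real.log (wt z) = Real.log (wt z) ^ (α + 1) := by
    rw [Real.rpow_add hlw, Real.rpow_one]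
  rw [this]
  exact Real.rpow_le_rpow_of_nonpos hl2 h1 (by linarith)

lemma dm_powerset {d : ℕ} {κ : Type*} [DecidableEq κ] (r : κ → Fin d → ℤ) (h : (Fin d → ℤ) → ℝ)
    (T : Finset κ) : ∀ z, dm (T.val.map r) h z =
      ∑ S ∈ T.powerset, (-1 : ℝ) ^ (T.card - S.card) * h (z + ∑ i ∈ S, r i) := by
  induction T using Finset.induction_on with
  | empty => intro z; simp [dm_zero]
  | insert a T ha ih =>
    intro z
    rw [Finset.insert_val_of_notMem ha, Multiset.map_cons, dm_cons, Finset.sum_powerset_insert ha]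
    simp only [dl]
    rw [ih, ih, sub_eq_neg_add, ← Finset.sum_neg_distrib]
    congr 1
    · refine Finset.sum_congr rfl fun S hS => ?_
      have := Finset.card_le_card (Finset.mem_powerset.mp hS)
      rw [Finset.card_insert_of_notMem ha, show T.card + 1 - S.card = (T.card - S.card) + 1 by omega, pow_succ]
      ring
    · refine Finset.sum_congr rfl fun S hS => ?_
      have haS : a ∉ S := fun h => ha (Finset.mem_powerset.mp hS h)
      rw [Finset.card_insert_of_notMem ha, Finset.card_insert_of_notMem haS, Finset.sum_insert haS,
        show T.card + 1 - (S.card + 1) = T.card - S.card by omega, add_assoc]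

lemma Dmulti_eq {d N j : ℕ} (A : Matrix (Fin d) (Fin d) ℝ) (r : Fin j → Fin d → ℤ)
    (u : Vec d → Vec N) (a : Fin N) (z : Fin d → ℤ) :
    Dmulti (fun i => latticePt d A (r i)) u (latticePt d A z) a =
      dm ((Finset.univ : Finset (Fin j)).val.map r) (fun z => u (latticePt d A z) a) z := by
  rw [dm_powerset, Finset.powerset_univ]
  unfold Dmulti
  rw [Finset.sum_apply]
  refine Finset.sum_congr rfl fun S _ => ?_
  rw [lp_add, lp_sum]
  simp

lemma DnormJ_lower {d N : ℕ} (A : Matrix (Fin d) (Fin d) ℝ) (R : Finset (Vec d)) (u : Vec d → Vec N)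
    (a : Fin N) (S : Multiset (Fin d → ℤ)) (hS : ∀ r ∈ S, latticePt d A r ∈ R) (z : Fin d → ℤ) :
    |dm S (fun z => u (latticePt d A z) a) z| ≤ DnormJ R (Multiset.card S) u (latticePt d A z) := by
  induction S using Quotient.inductionOn with
  | h l =>
  set S : Multiset (Fin d → ℤ) := (l : Multiset (Fin d → ℤ)) with hSl
  change |dm S _ z| ≤ DnormJ R l.length u _
  change ∀ r ∈ S, _ at hS
  have e : S = (Finset.univ : Finset (Fin l.length)).val.map l.get := by
    rw [Fin.univ_val_map, List.ofFn_get]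
  have h1 := Dmulti_eq A l.get u a z
  rw [← e] at h1
  rw [← h1]
  refine (le_enorm _ a).trans ?_
  have hm : ∀ i, latticePt d A (l.get i) ∈ R := fun i => hS _ (by simp [hSl])
  have h2 := le_sqrt_sum Finset.univ (fun ρs : Fin l.length → {x // x ∈ R} =>
    enorm (Dmulti (fun i => (ρs i : Vec d)) u (latticePt d A z))) (fun i => ⟨latticePt d A (l.get i), hm i⟩) (Finset.mem_univ _)
  rw [abs_of_nonneg (enorm_nonneg' _)] at h2
  exact h2

lemma DnormJ_upper {d N : ℕ} (A : Matrix (Fin d) (Fin d) ℝ) (R : Finset (Vec d))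
    (hRlat : ∀ ρ ∈ R, ρ ∈ Lattice d A) (u : Vec d → Vec N) (j : ℕ) (B : (Fin d → ℤ) → ℝ)
    (h : ∀ a (S : Multiset (Fin d → ℤ)), Multiset.card S = j →
      ∃ C, ∀ z, |dm S (fun z => u (latticePt d A z) a) z| ≤ C * B z) :
    ∃ C, ∀ z, DnormJ R j u (latticePt d A z) ≤ C * B z := by
  choose r hr using fun ρ : {x // x ∈ R} => hRlat ρ.1 ρ.2
  choose C hC using fun (a : Fin N) (ρs : Fin j → {x // x ∈ R}) =>
    h a ((Finset.univ : Finset (Fin j)).val.map fun i => r (ρs i)) (by simp)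
  refine ⟨∑ ρs, ∑ a, C a ρs, fun z => ?_⟩
  unfold DnormJ
  refine (sqrt_le_sum _ _ fun _ _ => enorm_nonneg' _).trans ?_
  rw [Finset.sum_mul]
  refine Finset.sum_le_sum fun ρs _ => ?_
  rw [Finset.sum_mul]
  refine (enorm_le_sum _).trans (Finset.sum_le_sum fun a _ => ?_)
  have e : (fun i => (ρs i : Vec d)) = fun i => latticePt d A (r (ρs i)) := by
    funext i; rw [hr]
  rw [e, Dmulti_eq]
  exact hC a ρs z

lemma closure_R {d : ℕ} (A : Matrix (Fin d) (Fin d) ℝ) (hA : IsUnit A.det) (R : Finset (Vec d))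
    (hRlat : ∀ ρ ∈ R, ρ ∈ Lattice d A)
    (hRspan : ∀ x ∈ Lattice d A, ∃ c : Vec d → ℤ, x = ∑ ρ ∈ R, (c ρ : ℝ) • ρ) :
    AddSubgroup.closure {r : Fin d → ℤ | latticePt d A r ∈ R} = ⊤ := by
  rw [eq_top_iff]
  intro z _
  obtain ⟨c, hc⟩ := hRspan (latticePt d A z) ⟨z, rfl⟩
  choose r hr using fun ρ : {x // x ∈ R} => hRlat ρ.1 ρ.2
  have e : z = ∑ ρ ∈ R.attach, c ρ.1 • r ρ := by
    apply lp_inj A hA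
    rw [lp_sum, hc, ← Finset.sum_attach]
    refine Finset.sum_congr rfl fun ρ _ => ?_
    rw [lp_zsmul, hr]
  rw [e]
  refine AddSubgroup.sum_mem _ fun ρ _ => AddSubgroup.zsmul_mem _ (AddSubgroup.subset_closure ?_) _
  change latticePt d A (r ρ) ∈ R
  rw [hr]
  exact ρ.2



/-- shifts of the operator, in integer coordinates -/
def hsft {d : ℕ} {κ : Type} (r : κ → Fin d → ℤ) : κ × κ × Fin 4 → Fin d → ℤ
  | (σ, ρ, i) => ![r ρ - r σ, -(r σ), r ρ, 0] i

/-- coefficients of the operator -/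
def hcof {N : ℕ} {κ : Type} (C : κ → κ → Fin N → Fin N → ℝ) : κ × κ × Fin 4 → Fin N → Fin N → ℝ
  | (σ, ρ, i), a, b => ![C σ ρ a b, -(C σ ρ a b), -(C σ ρ a b), C σ ρ a b] i

lemma hsum {d N : ℕ} {κ : Type} [Fintype κ] (r : κ → Fin d → ℤ) (C : κ → κ → Fin N → Fin N → ℝ)
    (a b : Fin N) (θ : (Fin d → ℤ) → ℝ) :
    ∑ t, hcof C t a b * θ (hsft r t) =
      ∑ σ, ∑ ρ, C σ ρ a b * (θ (r ρ - r σ) - θ (-(r σ)) - θ (r ρ) + θ 0) := by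
  rw [Fintype.sum_prod_type]
  refine Finset.sum_congr rfl fun σ _ => ?_
  rw [Fintype.sum_prod_type]
  refine Finset.sum_congr rfl fun ρ _ => ?_
  rw [Fin.sum_univ_four]
  simp [hcof, hsft]
  ring

lemma hsym {d N : ℕ} {κ : Type} [Fintype κ] (r : κ → Fin d → ℤ) (C : κ → κ → Fin N → Fin N → ℝ)
    (hC : ∀ σ ρ i j, C σ ρ i j = C ρ σ j i) (a b : Fin N) (θ : (Fin d → ℤ) → ℝ) :
    ∑ t, hcof C t b a * θ (-(hsft r t)) = ∑ t, hcof C t a b * θ (hsft r t) := by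
  rw [hsum r C b a (fun x => θ (-x)), hsum r C a b θ, Finset.sum_comm]
  refine Finset.sum_congr rfl fun σ _ => Finset.sum_congr rfl fun ρ _ => ?_
  rw [hC ρ σ b a]
  simp only [neg_sub, neg_neg, neg_zero]
  ring

lemma hm1 {d N : ℕ} {κ : Type} [Fintype κ] (r : κ → Fin d → ℤ) (C : κ → κ → Fin N → Fin N → ℝ)
    (a b : Fin N) (i : Fin d) : ∑ t, hcof C t a b * (hsft r t i : ℝ) = 0 := by
  rw [hsum r C a b (fun x => (x i : ℝ))]
  refine Finset.sum_eq_zero fun σ _ => Finset.sum_eq_zero fun ρ _ => ?_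
  simp

lemma Hop_eq {d N : ℕ} (A : Matrix (Fin d) (Fin d) ℝ) (R : Finset (Vec d))
    (C : Vec d → Vec d → Fin N → Fin N → ℝ) (r : {x // x ∈ R} → Fin d → ℤ)
    (hr : ∀ ρ, latticePt d A (r ρ) = ρ.1) (u : Vec d → Vec N) (z : Fin d → ℤ) (a : Fin N) :
    Hop d N R C u (latticePt d A z) a =
      ∑ b, ∑ t, hcof (fun σ ρ : {x // x ∈ R} => C σ.1 ρ.1) t a b * u (latticePt d A (z + hsft r t)) b := by
  have h : ∀ b, ∑ t, hcof (fun σ ρ : {x // x ∈ R} => C σ.1 ρ.1) t a b * u (latticePt d A (z + hsft r t)) b =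
      ∑ σ : {x // x ∈ R}, ∑ ρ : {x // x ∈ R}, C σ.1 ρ.1 a b * (u (latticePt d A (z + (r ρ - r σ))) b -
        u (latticePt d A (z + -(r σ))) b - u (latticePt d A (z + r ρ)) b + u (latticePt d A (z + 0)) b) := fun b =>
    hsum r (fun σ ρ : {x // x ∈ R} => C σ.1 ρ.1) a b (fun x => u (latticePt d A (z + x)) b)
  simp only [h]
  unfold Hop
  rw [Finset.sum_apply, ← Finset.sum_attach, Finset.sum_comm]
  refine Finset.sum_congr rfl fun σ _ => ?_
  rw [Finset.sum_apply, ← Finset.sum_attach, Finset.sum_comm]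
  refine Finset.sum_congr rfl fun ρ _ => ?_
  simp only [Pi.sub_apply, mulV, D1]
  rw [← Finset.sum_sub_distrib]
  refine Finset.sum_congr rfl fun b _ => ?_
  have e1 : latticePt d A (z + (r ρ - r σ)) = latticePt d A z - σ.1 + ρ.1 := by
    rw [lp_add, lp_sub, hr, hr]; abel
  have e2 : latticePt d A (z + -(r σ)) = latticePt d A z - σ.1 := by
    rw [← sub_eq_add_neg, lp_sub, hr]
  have e3 : latticePt d A (z + r ρ) = latticePt d A z + ρ.1 := by rw [lp_add, hr]
  rw [e1, e2, e3, add_zero]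
  ring

/-- polynomials of degree at most `k` in the lattice coordinates -/
def polyW {d : ℕ} (A : Matrix (Fin d) (Fin d) ℝ) (k : ℕ) : Submodule ℝ ((Fin d → ℤ) → ℝ) :=
  Submodule.span ℝ {h | ∃ i, i ≤ k ∧ ∃ js : Fin i → Fin d, h = fun z => ∏ m, latticePt d A z (js m)}

lemma polyW_mono {d : ℕ} (A : Matrix (Fin d) (Fin d) ℝ) {k k' : ℕ} (h : k ≤ k') : polyW A k ≤ polyW A k' := by
  refine Submodule.span_mono ?_
  rintro _ ⟨i, hi, js, rfl⟩
  exact ⟨i, hi.trans h, js, rfl⟩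

lemma polyW_mul {d : ℕ} (A : Matrix (Fin d) (Fin d) ℝ) (k : ℕ) (i : Fin d) (h : (Fin d → ℤ) → ℝ)
    (hh : h ∈ polyW A k) : (fun z => latticePt d A z i * h z) ∈ polyW A (k + 1) := by
  induction hh using Submodule.span_induction with
  | mem x hx =>
    obtain ⟨n, hn, js, rfl⟩ := hx
    refine Submodule.subset_span ⟨n + 1, by omega, Fin.cons i js, ?_⟩
    funext z
    rw [Fin.prod_univ_succ]
    simp
  | zero =>
    have e : (fun z => latticePt d A z i * (0 : (Fin d → ℤ) → ℝ) z) = 0 := by funext z; simp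
    rw [e]; exact (polyW A (k + 1)).zero_mem
  | add x y _ _ hx hy =>
    convert (polyW A (k + 1)).add_mem hx hy using 1
    funext z; simp [mul_add]
  | smul c x _ hx =>
    convert (polyW A (k + 1)).smul_mem c hx using 1
    funext z; simp; ring

lemma polyW_coord {d : ℕ} (A : Matrix (Fin d) (Fin d) ℝ) (hA : IsUnit A.det) (k : ℕ) (i : Fin d)
    (h : (Fin d → ℤ) → ℝ) (hh : h ∈ polyW A k) : (fun z => (z i : ℝ) * h z) ∈ polyW A (k + 1) := by
  have e : (fun z => (z i : ℝ) * h z) = ∑ m, A⁻¹ i m • (fun z => latticePt d A z m * h z) := by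
    funext z
    rw [lp_inv A hA, Finset.sum_apply, Finset.sum_mul]
    refine Finset.sum_congr rfl fun m _ => ?_
    simp; ring
  rw [e]
  exact Submodule.sum_mem _ fun m _ => Submodule.smul_mem _ _ (polyW_mul A k m h hh)

lemma polyW_chs {d : ℕ} (A : Matrix (Fin d) (Fin d) ℝ) (hA : IsUnit A.det) (i : Fin d) (b : ℕ) :
    ∀ (k : ℕ) (h : (Fin d → ℤ) → ℝ), h ∈ polyW A k →
      (fun z => chs b (z i) * h z) ∈ polyW A (k + b) := by
  induction b with
  | zero => intro k h hh; simpa [chs] using hh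
  | succ b ih =>
    intro k h hh
    have h1 := ih k h hh
    have h2 := polyW_coord A hA _ i _ h1
    have h3 := polyW_mono A (Nat.le_succ (k + b)) h1
    rw [← add_assoc]
    convert (polyW A (k + b + 1)).smul_mem ((b + 1 : ℝ)⁻¹) ((polyW A (k + b + 1)).sub_mem h2 ((polyW A (k + b + 1)).smul_mem (b : ℝ) h3)) using 1
    funext z
    simp [chs]
    ring

lemma polyW_chp {d : ℕ} (A : Matrix (Fin d) (Fin d) ℝ) (hA : IsUnit A.det) (β : Fin d → ℕ) :
    chp β ∈ polyW A (∑ i, β i) := by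
  have h : ∀ T : Finset (Fin d), (fun z => ∏ i ∈ T, chs (β i) (z i)) ∈ polyW A (∑ i ∈ T, β i) := by
    intro T
    induction T using Finset.induction_on with
    | empty => exact Submodule.subset_span ⟨0, by simp, Fin.elim0, by funext z; simp⟩
    | insert a T ha ih =>
      have := polyW_chs A hA a (β a) _ _ ih
      simp only [Finset.prod_insert ha, Finset.sum_insert ha]
      rwa [add_comm]
  exact h Finset.univ

lemma polyW_sum {d : ℕ} (A : Matrix (Fin d) (Fin d) ℝ) (p : ℕ) (F : (Fin d → ℤ) → ℝ)
    (hmom : ∀ i : ℕ, i < p → ∀ js : Fin i → Fin d,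
      HasSum (fun z => F z * ∏ m, latticePt d A z (js m)) 0) (k : ℕ) (hk : k < p)
    (h : (Fin d → ℤ) → ℝ) (hh : h ∈ polyW A k) : HasSum (fun z => F z * h z) 0 := by
  induction hh using Submodule.span_induction with
  | mem x hx =>
    obtain ⟨n, hn, js, rfl⟩ := hx
    exact hmom n (by omega) js
  | zero => simpa using (hasSum_zero : HasSum (fun _ : Fin d → ℤ => (0:ℝ)) 0)
  | add x y _ _ hx hy =>
    have := hx.add hy
    simpa [mul_add] using this
  | smul c x _ hx =>
    have := hx.mul_left c
    simp only [mul_zero] at this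
    have e : (fun z => F z * (c • x) z) = fun z => c * (F z * x z) := by
      funext z; simp; ring
    rw [e]; exact this



lemma main_Z (d N : ℕ) (hd : 2 ≤ d)
    (A : Matrix (Fin d) (Fin d) ℝ) (hA : IsUnit A.det)
    (R : Finset (Vec d))
    (hRlat : ∀ ρ ∈ R, ρ ∈ Lattice d A)
    (hRspan : ∀ x ∈ Lattice d A, ∃ c : Vec d → ℤ, x = ∑ ρ ∈ R, (c ρ : ℝ) • ρ)
    (C : Vec d → Vec d → Fin N → Fin N → ℝ)
    (hCsym : ∀ σ ρ i j, C σ ρ i j = C ρ σ j i)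
    (G : Vec d → Fin N → Fin N → ℝ) (hG : IsLatticeGreen d N A R C G)
    (u : Vec d → Vec N) (hu : InH1 A R u)
    (p : ℕ) (α : ℝ) (hα : α < -1) (c : ℝ)
    (hbound : ∀ z : Fin d → ℤ,
      enorm (Hop d N R C u (latticePt d A z)) ≤
        c * ang (latticePt d A z) ^ (-(d : ℝ) - p) *
          Real.log (ang (latticePt d A z)) ^ α)
    (hmom : ∀ i : ℕ, i < p → ∀ (a : Fin N) (js : Fin i → Fin d),
      HasSum (fun z : Fin d → ℤ =>
        Hop d N R C u (latticePt d A z) a * ∏ m, latticePt d A z (js m)) 0)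
    (j : ℕ) (hj : 1 ≤ j)
    (hD : ∀ m : ℕ, 1 ≤ m → m ≤ j - 2 → ∀ z : Fin d → ℤ,
          DnormJ R m (Hop d N R C u) (latticePt d A z) ≤
            c * ang (latticePt d A z) ^ (-(d : ℝ) - p - m) *
              Real.log (ang (latticePt d A z)) ^ α) :
    ∃ Cj : ℝ, ∀ z : Fin d → ℤ,
        DnormJ R j u (latticePt d A z) ≤
          Cj * ang (latticePt d A z) ^ ((2 : ℝ) - d - p - j) := by
  have hcl := closure_R A hA R hRlat hRspan
  choose r hr using fun ρ : {x // x ∈ R} => hRlat ρ.1 ρ.2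
  -- bound `c * ang ^ e * log ang ^ α` in integer coordinates
  have conv : ∀ (n : ℕ) (e : ℝ), e = -(n:ℝ) → ∃ K, 0 ≤ K ∧ ∀ z : Fin d → ℤ,
      c * ang (latticePt d A z) ^ e * Real.log (ang (latticePt d A z)) ^ α ≤
        K * (1 / wt z ^ n * Real.log (wt z) ^ α) := by
    intro n e he
    obtain ⟨C1, h10, h1⟩ := ang_pow A hA n e he
    obtain ⟨C2, h20, h2⟩ := log_ang A hA α hα
    refine ⟨|c| * C1 * C2, by positivity, fun z => ?_⟩
    have h3 := two_le_ang (latticePt d A z)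
    have h4 : 0 < Real.log (ang (latticePt d A z)) := Real.log_pos (by linarith)
    have hw := wt_pos z
    have hlw := log_wt_pos z
    calc _ ≤ |c| * ang (latticePt d A z) ^ e * Real.log (ang (latticePt d A z)) ^ α := by
          gcongr; exact le_abs_self c
      _ ≤ |c| * (C1 * (1 / wt z ^ n)) * (C2 * Real.log (wt z) ^ α) := by
          have := h1 z; have := h2 z; gcongr
      _ = _ := by ring
  have conv2 : ∀ (n : ℕ) (e : ℝ), e = -(n:ℝ) → ∃ K, ∀ z : Fin d → ℤ,
      c * ang (latticePt d A z) ^ e * Real.log (ang (latticePt d A z)) ^ α ≤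
        K * (1 / (wt z ^ n * Real.log (wt z))) := by
    intro n e he
    obtain ⟨K, hK0, hK⟩ := conv n e he
    obtain ⟨C2, h20, h2⟩ := log_wt_alpha (d := d) α hα
    refine ⟨K * C2, fun z => (hK z).trans ?_⟩
    have hw := wt_pos z
    have hlw := log_wt_pos z
    calc _ ≤ K * (1 / wt z ^ n * (C2 * (1 / Real.log (wt z)))) := by
          have := h2 z; gcongr
      _ = _ := by field_simp
  set U : Fin N → (Fin d → ℤ) → ℝ := fun a z => u (latticePt d A z) a with hUdef
  set f : Fin N → (Fin d → ℤ) → ℝ := fun a z => Hop d N R C u (latticePt d A z) a with hfdef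
  have hU : ∀ a, ∀ ε : ℝ, 0 < ε → ∃ B, 0 ≤ B ∧ ∀ z, |U a z| ≤ B + ε * wt z := by
    intro a
    refine growth (U a) fun i => dirs_tendsto _ hcl (U a) (fun q hq => ?_) (ev i)
    have h1 : Tendsto (fun z => Real.sqrt (Dnorm1Sq R u (latticePt d A z))) cofinite (𝓝 0) := by
      have := (Summable.tendsto_cofinite_zero hu).sqrt
      simpa using this
    refine squeeze_zero_norm (fun z => ?_) h1
    rw [Real.norm_eq_abs]
    have h2 := le_sqrt_sum R (fun ρ => enorm (D1 ρ u (latticePt d A z))) (latticePt d A q) hq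
    rw [abs_of_nonneg (enorm_nonneg' _)] at h2
    refine le_trans ?_ h2
    have h3 := le_enorm (D1 (latticePt d A q) u (latticePt d A z)) a
    refine le_trans (le_of_eq ?_) h3
    simp only [dl, hUdef, D1, lp_add, Pi.sub_apply]
  have hGd : ∀ b k (S : Multiset (Fin d → ℤ)), S ≠ 0 →
      ∃ C, ∀ x, |dm S (fun z => G (latticePt d A z) b k) x| ≤ C * (1 / wt x ^ (d + Multiset.card S - 2)) := by
    intro b k S hS
    have hn : 1 ≤ Multiset.card S := Multiset.card_pos.mpr hS
    refine ext_dirs _ hcl _ (slow_pow _) (Multiset.card S) _ (fun T hT hTR => ?_) S rfl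
    obtain ⟨cj, hcj⟩ := hG.2 (Multiset.card S) hn
    obtain ⟨K, hK0, hK⟩ := ang_pow A hA (d + Multiset.card S - 2) ((2:ℝ) - d - (Multiset.card S : ℕ)) (by
      rw [Nat.cast_sub (by omega)]; push_cast; ring)
    refine ⟨|cj| * K, fun z => ?_⟩
    have h1 := DnormJ_lower A R (col G k) b T hTR z
    rw [hT] at h1
    have h2 := le_sqrt_sum Finset.univ (fun k => DnormJ R (Multiset.card S) (col G k) (latticePt d A z)) k (Finset.mem_univ k)
    have h3 := hcj z
    have h4 := two_le_ang (latticePt d A z)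
    calc _ ≤ DnormJ R (Multiset.card S) (col G k) (latticePt d A z) := h1
      _ ≤ DnormJmat R (Multiset.card S) G (latticePt d A z) := (le_abs_self _).trans h2
      _ ≤ cj * ang (latticePt d A z) ^ ((2:ℝ) - d - (Multiset.card S : ℕ)) := h3
      _ ≤ |cj| * (K * (1 / wt z ^ (d + Multiset.card S - 2))) := by
        refine mul_le_mul (le_abs_self _) (hK z) (by positivity) (abs_nonneg _)
      _ = _ := by ring
  have hf0 : ∀ a z, |f a z| ≤ enorm (Hop d N R C u (latticePt d A z)) := fun a z => le_enorm _ a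
  have hfw : ∀ a, Summable fun m => wt m ^ p * |f a m| := by
    intro a
    obtain ⟨K, hK0, hK⟩ := conv (d + p) (-(d:ℝ) - p) (by push_cast; ring)
    refine Summable.of_nonneg_of_le (fun z => ?_) (fun z => ?_) ((summable_log (d := d) α hα).mul_left K)
    · have := wt_pos z; positivity
    · have hw := wt_pos z
      calc _ ≤ wt z ^ p * (K * (1 / wt z ^ (d + p) * Real.log (wt z) ^ α)) := by
            gcongr
            exact (hf0 a z).trans ((hbound z).trans (hK z))
        _ = _ := by rw [pow_add]; field_simp
  have hfd : ∀ a (S : Multiset (Fin d → ℤ)), Multiset.card S ≤ j - 2 →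
      ∃ C, ∀ x, |dm S (f a) x| ≤ C * (1 / (wt x ^ (d + p + Multiset.card S) * Real.log (wt x))) := by
    intro a S hS
    rcases Nat.eq_zero_or_pos (Multiset.card S) with h0 | h0
    · obtain ⟨K, hK⟩ := conv2 (d + p) (-(d:ℝ) - p) (by push_cast; ring)
      refine ⟨K, fun z => ?_⟩
      rw [h0, Multiset.card_eq_zero.mp h0, dm_zero, add_zero]
      exact (hf0 a z).trans ((hbound z).trans (hK z))
    · obtain ⟨K, hK⟩ := conv2 (d + p + Multiset.card S) (-(d:ℝ) - p - (Multiset.card S : ℕ)) (by push_cast; ring)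
      refine ext_dirs _ hcl _ (slow_pow_log _) (Multiset.card S) _ (fun T hT hTR => ?_) S rfl
      refine ⟨K, fun z => ?_⟩
      have h1 := DnormJ_lower A R (Hop d N R C u) a T hTR z
      rw [hT] at h1
      exact h1.trans ((hD _ h0 hS z).trans (hK z))
  have hfin : ∀ a (S : Multiset (Fin d → ℤ)), Multiset.card S = j →
      ∃ C, ∀ z, |dm S (U a) z| ≤ C * (1 / wt z ^ (d + p + j - 2)) := by
    intro a S hS
    refine abs_main hd (hsft r) (hcof fun σ ρ : {x // x ∈ R} => C σ.1 ρ.1)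
      (fun b k z => G (latticePt d A z) b k) U f (hm1 r _)
      (hsym r _ fun σ ρ => hCsym σ.1 ρ.1) (fun k a z => ?_) hGd
      (fun a z => Hop_eq A R C r hr u z a) hU p j hj hfw (fun a β hβ => ?_) hfd a S hS
    · have h1 := Hop_eq A R C r hr (col G k) z a
      simp only [col] at h1
      rw [← h1]
      have h2 := congrFun (hG.1 k z) a
      rw [h2]
      have h4 : latticePt d A z = 0 ↔ z = 0 := by
        rw [← lp_zero A]; exact (lp_inj A hA).eq_iff
      by_cases hz : z = 0
      · subst hz
        by_cases hak : a = k <;> simp [lp_zero, hak]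
      · simp [h4, hz]
    · exact polyW_sum A p (f a) (fun i hi js => hmom i hi a js) _ hβ _ (polyW_chp A hA β)
  obtain ⟨K, hK⟩ := DnormJ_upper A R hRlat u j _ hfin
  obtain ⟨K2, hK20, hK2⟩ := pow_ang A (d + p + j - 2) ((2:ℝ) - d - p - j) (by
    rw [Nat.cast_sub (by omega)]; push_cast; ring)
  refine ⟨|K| * K2, fun z => (hK z).trans ?_⟩
  have hw := wt_pos z
  calc K * (1 / wt z ^ (d + p + j - 2)) ≤ |K| * (K2 * ang (latticePt d A z) ^ ((2:ℝ) - d - p - j)) :=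
        mul_le_mul (le_abs_self _) (hK2 z) (by positivity) (abs_nonneg _)
    _ = _ := by ring

/-- Remark: no logarithmic factor when `α < -1`. -/
theorem decay_with_vanishing_moments_neg_alpha
    (d N : ℕ) (hd : 2 ≤ d)
    (A : Matrix (Fin d) (Fin d) ℝ) (hA : IsUnit A.det)
    (R : Finset (Vec d)) (hR0 : (0 : Vec d) ∉ R)
    (hRlat : ∀ ρ ∈ R, ρ ∈ Lattice d A)
    (hRsym : ∀ ρ ∈ R, -ρ ∈ R)
    (hRspan : ∀ x ∈ Lattice d A, ∃ c : Vec d → ℤ, x = ∑ ρ ∈ R, (c ρ : ℝ) • ρ)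
    (C : Vec d → Vec d → Fin N → Fin N → ℝ)
    (hCsym : ∀ σ ρ i j, C σ ρ i j = C ρ σ j i)
    (hCpt : ∀ σ ρ, C σ ρ = C (-σ) (-ρ))
    (hstab : IsStable d N A R C)
    (G : Vec d → Fin N → Fin N → ℝ) (hG : IsLatticeGreen d N A R C G)
    (u : Vec d → Vec N) (hu : InH1 A R u)
    (p : ℕ) (α : ℝ) (hα : α < -1) (c : ℝ) (hc : 0 < c)
    (hbound : ∀ z : Fin d → ℤ,
      enorm (Hop d N R C u (latticePt d A z)) ≤
        c * ang (latticePt d A z) ^ (-(d : ℝ) - p) *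
          Real.log (ang (latticePt d A z)) ^ α)
    (hmom : ∀ i : ℕ, i < p → ∀ (a : Fin N) (js : Fin i → Fin d),
      HasSum (fun z : Fin d → ℤ =>
        Hop d N R C u (latticePt d A z) a * ∏ m, latticePt d A z (js m)) 0) :
    (∀ j : ℕ, j = 1 ∨ j = 2 → ∃ Cj : ℝ, ∀ z : Fin d → ℤ,
        DnormJ R j u (latticePt d A z) ≤
          Cj * ang (latticePt d A z) ^ ((2 : ℝ) - d - p - j)) ∧
    (∀ j : ℕ, 3 ≤ j →
      (∀ m : ℕ, 1 ≤ m → m ≤ j - 2 → ∀ z : Fin d → ℤ,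
          DnormJ R m (Hop d N R C u) (latticePt d A z) ≤
            c * ang (latticePt d A z) ^ (-(d : ℝ) - p - m) *
              Real.log (ang (latticePt d A z)) ^ α) →
      ∃ Cj : ℝ, ∀ z : Fin d → ℤ,
        DnormJ R j u (latticePt d A z) ≤
          Cj * ang (latticePt d A z) ^ ((2 : ℝ) - d - p - j)) := by
  refine ⟨fun j hj => ?_, fun j hj hD => ?_⟩
  · exact main_Z d N hd A hA R hRlat hRspan C hCsym G hG u hu p α hα c hbound hmom j (by omega) (fun m h1 h2 => by omega)
  · exact main_Z d N hd A hA R hRlat hRspan C hCsym G hG u hu p α hα c hbound hmom j (by omega) hD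

end Defect
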